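/- arXiv:1608.00710 — 2 statements merged into one kernel-verified Lean document; each statement's English description precedes it below -/
import Mathlib

section
/- Let X_1, X_2, … be identically distributed and upper extended negatively dependent random variables in a sub-linear expectation space with lim_{c→∞} 𝔼[(|X_1| − c)⁺] = 0 and C_𝕍(|X_1|) < ∞, and set S_n = Σ_{k=1}^n X_k. Then 𝕍*( limsup_{n→∞} S_n/n > 𝔼[X_1] ) = 0. -/
open Filter MeasureTheory
open scoped ENNReal NNReal

noncomputable section

/-- A sub-linear expectation on `Ω`: a monotone, constant-preserving, sub-additive,
positively homogeneous functional on real random variables (with values in the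
extended reals, so that random variables without a finite expectation are allowed). -/
structure SublinearExp (Ω : Type) where
  E : (Ω → ℝ) → EReal
  mono : ∀ X Y : Ω → ℝ, (∀ ω, X ω ≤ Y ω) → E X ≤ E Y
  const_eq : ∀ c : ℝ, E (fun _ => c) = (c : EReal)
  subadd : ∀ X Y : Ω → ℝ, E (fun ω => X ω + Y ω) ≤ E X + E Y
  pos_homog : ∀ lam : ℝ, 0 ≤ lam → ∀ X : Ω → ℝ,
    E (fun ω => lam * X ω) = (lam : EReal) * E X

namespace SublinearExp

variable {Ω : Type}

/-- The conjugate expectation `ℰ[X] := −𝔼[−X]`. -/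
def cE (SL : SublinearExp Ω) (X : Ω → ℝ) : EReal := - SL.E fun ω => - X ω

/-- The upper capacity `𝕍(A) := inf{𝔼[ξ] : 1_A ≤ ξ}`. -/
def V (SL : SublinearExp Ω) (A : Set Ω) : ℝ :=
  sInf {x : ℝ | ∃ ξ : Ω → ℝ,
    (∀ ω, A.indicator (fun _ => (1 : ℝ)) ω ≤ ξ ω) ∧ SL.E ξ = (x : EReal)}

/-- The lower capacity `𝓋(A) := 1 − 𝕍(Aᶜ)`. -/
def vLow (SL : SublinearExp Ω) (A : Set Ω) : ℝ := 1 - SL.V Aᶜ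

/-- The Choquet integral `C_𝕍(X) := ∫₀^∞ 𝕍(X ≥ t) dt` (of a non-negative r.v.). -/
def Choquet (SL : SublinearExp Ω) (X : Ω → ℝ) : ℝ≥0∞ :=
  ∫⁻ t in Set.Ioi (0 : ℝ), ENNReal.ofReal (SL.V {ω | t ≤ X ω})

/-- The outer capacity `𝕍*(A) := inf{Σ_n 𝕍(A_n) : A ⊆ ∪_n A_n}`. -/
def Vout (SL : SublinearExp Ω) (A : Set Ω) : ℝ≥0∞ :=
  ⨅ (B : ℕ → Set Ω) (_ : A ⊆ ⋃ n, B n), ∑' n, ENNReal.ofReal (SL.V (B n))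

/-- The upper capacity is continuous: continuous from below and from above. -/
def ContinuousCapacity (SL : SublinearExp Ω) : Prop :=
  (∀ A : ℕ → Set Ω, Monotone A →
    Tendsto (fun n => SL.V (A n)) atTop (nhds (SL.V (⋃ n, A n)))) ∧
  (∀ A : ℕ → Set Ω, Antitone A →
    Tendsto (fun n => SL.V (A n)) atTop (nhds (SL.V (⋂ n, A n))))

/-- Bounded Lipschitz function on ℝ. -/
def IsBLip (g : ℝ → ℝ) : Prop :=
  (∃ L : NNReal, LipschitzWith L g) ∧ ∃ M : ℝ, ∀ x, |g x| ≤ M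

/-- Local Lipschitz function on ℝ: `|φ(x) − φ(y)| ≤ C(1+|x|^m+|y|^m)|x−y|`. -/
def IsLocLip (φ : ℝ → ℝ) : Prop :=
  ∃ (C : ℝ) (m : ℕ), ∀ x y : ℝ, |φ x - φ y| ≤ C * (1 + |x| ^ m + |y| ^ m) * |x - y|

/-- Upper extended negative dependence (finite family) with dominating constant `K`:
`𝔼[∏ g_i(X_i)] ≤ K ∏ 𝔼[g_i(X_i)]` for all non-negative bounded Lipschitz
non-decreasing `g_i`.  (Expectations of bounded functions are finite, whence
the `toReal`.) -/
def UENDFin (SL : SublinearExp Ω) (K : ℝ) {n : ℕ} (X : Fin n → Ω → ℝ) : Prop :=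
  ∀ g : Fin n → ℝ → ℝ, (∀ i, IsBLip (g i)) → (∀ i, Monotone (g i)) →
    (∀ i x, 0 ≤ g i x) →
    SL.E (fun ω => ∏ i, g i (X i ω)) ≤
      ((K * ∏ i, (SL.E fun ω => g i (X i ω)).toReal : ℝ) : EReal)

/-- Upper extended negative dependence for a sequence. -/
def UEND (SL : SublinearExp Ω) (K : ℝ) (X : ℕ → Ω → ℝ) : Prop :=
  ∀ n : ℕ, ∀ g : ℕ → ℝ → ℝ, (∀ i, IsBLip (g i)) → (∀ i, Monotone (g i)) →
    (∀ i x, 0 ≤ g i x) →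
    SL.E (fun ω => ∏ i ∈ Finset.range n, g i (X i ω)) ≤
      ((K * ∏ i ∈ Finset.range n, (SL.E fun ω => g i (X i ω)).toReal : ℝ) : EReal)

/-- Lower extended negative dependence for a sequence. -/
def LEND (SL : SublinearExp Ω) (K : ℝ) (X : ℕ → Ω → ℝ) : Prop :=
  ∀ n : ℕ, ∀ g : ℕ → ℝ → ℝ, (∀ i, IsBLip (g i)) → (∀ i, Antitone (g i)) →
    (∀ i x, 0 ≤ g i x) →
    SL.E (fun ω => ∏ i ∈ Finset.range n, g i (X i ω)) ≤
      ((K * ∏ i ∈ Finset.range n, (SL.E fun ω => g i (X i ω)).toReal : ℝ) : EReal)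

/-- Extended negative dependence = upper and lower END. -/
def END (SL : SublinearExp Ω) (K : ℝ) (X : ℕ → Ω → ℝ) : Prop :=
  UEND SL K X ∧ LEND SL K X

/-- Upper extended negative dependence under the conjugate expectation `ℰ`
(finite family). -/
def UENDFinConj (SL : SublinearExp Ω) (K : ℝ) {n : ℕ} (X : Fin n → Ω → ℝ) : Prop :=
  ∀ g : Fin n → ℝ → ℝ, (∀ i, IsBLip (g i)) → (∀ i, Monotone (g i)) →
    (∀ i x, 0 ≤ g i x) →
    SL.cE (fun ω => ∏ i, g i (X i ω)) ≤
      ((K * ∏ i, (SL.cE fun ω => g i (X i ω)).toReal : ℝ) : EReal)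

/-- Upper extended negative dependence under the conjugate expectation (sequence). -/
def UENDconj (SL : SublinearExp Ω) (K : ℝ) (X : ℕ → Ω → ℝ) : Prop :=
  ∀ n : ℕ, ∀ g : ℕ → ℝ → ℝ, (∀ i, IsBLip (g i)) → (∀ i, Monotone (g i)) →
    (∀ i x, 0 ≤ g i x) →
    SL.cE (fun ω => ∏ i ∈ Finset.range n, g i (X i ω)) ≤
      ((K * ∏ i ∈ Finset.range n, (SL.cE fun ω => g i (X i ω)).toReal : ℝ) : EReal)

/-- Lower extended negative dependence under the conjugate expectation (sequence). -/
def LENDconj (SL : SublinearExp Ω) (K : ℝ) (X : ℕ → Ω → ℝ) : Prop :=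
  ∀ n : ℕ, ∀ g : ℕ → ℝ → ℝ, (∀ i, IsBLip (g i)) → (∀ i, Antitone (g i)) →
    (∀ i x, 0 ≤ g i x) →
    SL.cE (fun ω => ∏ i ∈ Finset.range n, g i (X i ω)) ≤
      ((K * ∏ i ∈ Finset.range n, (SL.cE fun ω => g i (X i ω)).toReal : ℝ) : EReal)

/-- Extended negative dependence under the conjugate expectation. -/
def ENDconj (SL : SublinearExp Ω) (K : ℝ) (X : ℕ → Ω → ℝ) : Prop :=
  UENDconj SL K X ∧ LENDconj SL K X

/-- Extended independence of a sequence: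
`𝔼[∏ ψ_i(X_i)] = ∏ 𝔼[ψ_i(X_i)]` for non-negative local Lipschitz `ψ_i`,
whenever the expectations involved are finite. -/
def ExtIndep (SL : SublinearExp Ω) (X : ℕ → Ω → ℝ) : Prop :=
  ∀ n : ℕ, ∀ ψ : ℕ → ℝ → ℝ, (∀ i, IsLocLip (ψ i)) → (∀ i x, 0 ≤ ψ i x) →
    (∀ i ∈ Finset.range n, SL.E (fun ω => ψ i (X i ω)) ≠ ⊤) →
    SL.E (fun ω => ∏ i ∈ Finset.range n, ψ i (X i ω)) =
      ((∏ i ∈ Finset.range n, (SL.E fun ω => ψ i (X i ω)).toReal : ℝ) : EReal)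

/-- Extended independence of two random variables. -/
def ExtIndepPair (SL : SublinearExp Ω) (Y Z : Ω → ℝ) : Prop :=
  ∀ ψ₁ ψ₂ : ℝ → ℝ, IsLocLip ψ₁ → IsLocLip ψ₂ →
    (∀ x, 0 ≤ ψ₁ x) → (∀ x, 0 ≤ ψ₂ x) →
    SL.E (fun ω => ψ₁ (Y ω)) ≠ ⊤ → SL.E (fun ω => ψ₂ (Z ω)) ≠ ⊤ →
    SL.E (fun ω => ψ₁ (Y ω) * ψ₂ (Z ω)) =
      (((SL.E fun ω => ψ₁ (Y ω)).toReal * (SL.E fun ω => ψ₂ (Z ω)).toReal : ℝ) : EReal)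

/-- Identically distributed: `𝔼[φ(X_i)] = 𝔼[φ(X_1)]` for all local Lipschitz `φ`. -/
def IdentDist (SL : SublinearExp Ω) (X : ℕ → Ω → ℝ) : Prop :=
  ∀ (i : ℕ) (φ : ℝ → ℝ), IsLocLip φ →
    SL.E (fun ω => φ (X i ω)) = SL.E fun ω => φ (X 0 ω)

end SublinearExp

/-- `log x = ln(x ∨ e)`. -/
def paperLog (x : ℝ) : ℝ := Real.log (max x (Real.exp 1))

/-- `a_n = √(2 n log log n)` with the above convention for `log`. -/
def lilA (n : ℕ) : ℝ := Real.sqrt (2 * n * paperLog (paperLog n))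

/-! Truncate the summands from above at the dyadic level `c = 2 ^ j`. Extended negative dependence
factorizes the exponential moment of the truncated sum, and Chernoff's bound with parameter `s / c`
gives a probability of order `Q = exp (-2 * s)` as soon as `𝔼[(W ∧ c) ^ 2] ≤ Q * c`. Finiteness of
the Choquet integral makes both the large jumps and the ratios `𝔼[(W ∧ 2 ^ j) ^ 2] / 2 ^ j`
summable over `j`, the latter because passing from `2 ^ j` to `2 ^ (j + 1)` halves the ratio up to
a summable error. Borel–Cantelli then controls the sums along `n = r * 2 ^ j`, and for non-negative
summands monotonicity interpolates between these with relative error `1 / r`. Summands of either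
sign are replaced by `(X + b) ∨ 0`: uniform integrability of the negative part makes
`𝔼[(X + b) ∨ 0] - b` exceed `𝔼[X]` by arbitrarily little. -/

section RealLemmas

lemma exp_le_one_add_add_sq_mul_exp {x s : ℝ} (hx : 0 ≤ x) (hxs : x ≤ s) :
    Real.exp x ≤ 1 + x + x ^ 2 * Real.exp s := by
  have exp_le : Real.exp x ≤ 1 + x * Real.exp x := by
    have h := mul_le_mul_of_nonneg_right (Real.one_sub_le_exp_neg x) (Real.exp_pos x).le
    rw [← Real.exp_add, neg_add_cancel, Real.exp_zero] at h
    linarith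
  calc Real.exp x ≤ 1 + x * (1 + x * Real.exp x) := exp_le.trans (by gcongr)
    _ = 1 + x + x ^ 2 * Real.exp x := by ring
    _ ≤ 1 + x + x ^ 2 * Real.exp s := by gcongr

lemma sq_mul_exp_mul_exp_neg_two_mul_le {s : ℝ} (hs : 0 ≤ s) :
    s ^ 2 * Real.exp s * Real.exp (-(2 * s)) ≤ 2 := by
  have sq_le : s ^ 2 ≤ 2 * Real.exp s := by linarith [Real.quadratic_le_exp_of_nonneg hs]
  calc s ^ 2 * Real.exp s * Real.exp (-(2 * s))
      ≤ 2 * Real.exp s * Real.exp s * Real.exp (-(2 * s)) := by gcongr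
    _ = 2 * Real.exp (s + s + -(2 * s)) := by rw [Real.exp_add, Real.exp_add]; ring
    _ = 2 := by rw [show s + s + -(2 * s) = 0 by ring, Real.exp_zero, mul_one]

lemma lipschitzOnWith_exp_Iic (M : ℝ) :
    LipschitzOnWith (Real.exp M).toNNReal Real.exp (Set.Iic M) := by
  refine (convex_Iic M).lipschitzOnWith_of_nnnorm_deriv_le
    (fun x _ => Real.differentiableAt_exp) fun x hx => ?_
  rw [Real.deriv_exp, ← norm_toNNReal, Real.norm_of_nonneg (Real.exp_pos x).le]
  exact Real.toNNReal_le_toNNReal (Real.exp_le_exp.2 hx)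

lemma summable_of_succ_le_mul_add {a u : ℕ → ℝ} {ρ : ℝ} (ha : ∀ n, 0 ≤ a n) (hu : Summable u)
    (hu0 : ∀ n, 0 ≤ u n) (hρ : ρ < 1) (h : ∀ n, a (n + 1) ≤ ρ * a n + u n) : Summable a := by
  refine summable_of_sum_range_le (c := (a 0 + ∑' n, u n) / (1 - ρ)) ha fun N => ?_
  have sum_succ_le : ∑ n ∈ Finset.range N, a (n + 1) ≤
      ρ * ∑ n ∈ Finset.range N, a n + ∑' n, u n := by
    calc ∑ n ∈ Finset.range N, a (n + 1)
        ≤ ∑ n ∈ Finset.range N, (ρ * a n + u n) := Finset.sum_le_sum fun n _ => h n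
      _ = ρ * ∑ n ∈ Finset.range N, a n + ∑ n ∈ Finset.range N, u n := by
        rw [Finset.sum_add_distrib, Finset.mul_sum]
      _ ≤ _ := by gcongr; exact hu.sum_le_tsum _ fun n _ => hu0 n
  have sum_le : ∑ n ∈ Finset.range N, a n ≤ ∑ n ∈ Finset.range N, a (n + 1) + a 0 := by
    rw [← Finset.sum_range_succ', Finset.sum_range_succ]
    exact le_add_of_nonneg_right (ha N)
  rw [le_div_iff₀ (sub_pos.2 hρ)]
  linarith

lemma exists_mul_two_pow_le_lt {R n : ℕ} (hR : 1 ≤ R) (hn : R ≤ n) :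
    ∃ r ∈ Finset.Ico R (2 * R), ∃ j : ℕ, r * 2 ^ j ≤ n ∧ n < (r + 1) * 2 ^ j := by
  induction n using Nat.strong_induction_on with
  | _ n ih =>
    by_cases h : n < 2 * R
    · exact ⟨n, by simp [hn, h], 0, by simp, by simp⟩
    · obtain ⟨r, hr, j, hle, hlt⟩ := ih (n / 2) (by omega) (by omega)
      exact ⟨r, hr, j + 1, by rw [pow_succ, ← mul_assoc]; omega,
        by rw [pow_succ, ← mul_assoc]; omega⟩

lemma eventually_sum_range_le_of_dyadic {z : ℕ → ℝ} (hz : ∀ k, 0 ≤ z k) {a b : ℝ} (ha : 0 ≤ a)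
    (hab : a < b)
    (h : ∀ᶠ r : ℕ in atTop, ∀ᶠ j : ℕ in atTop,
      ∑ k ∈ Finset.range (r * 2 ^ j), z k ≤ ((r * 2 ^ j : ℕ) : ℝ) * a) :
    ∀ᶠ n : ℕ in atTop, ∑ k ∈ Finset.range n, z k ≤ n * b := by
  have eventually_le_mul : ∀ᶠ r : ℕ in atTop, a ≤ r * (b - a) :=
    (tendsto_natCast_atTop_atTop.atTop_mul_const (sub_pos.2 hab)).eventually_ge_atTop a
  obtain ⟨R, hR⟩ := eventually_atTop.1 ((h.and eventually_le_mul).and (eventually_ge_atTop 1))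
  obtain ⟨J, hJ⟩ := eventually_atTop.1 <| (eventually_all_finset (Finset.Icc R (2 * R))).2
    fun r hr => (hR r (Finset.mem_Icc.1 hr).1).1.1
  filter_upwards [eventually_ge_atTop R, eventually_ge_atTop (2 * R * 2 ^ J)] with n hRn hJn
  obtain ⟨r, hr, j, hle, hlt⟩ := exists_mul_two_pow_le_lt (hR R le_rfl).2 hRn
  rw [Finset.mem_Ico] at hr
  have hJj : J ≤ j := by
    by_contra! hjJ
    have : (r + 1) * 2 ^ j ≤ 2 * R * 2 ^ J :=
      Nat.mul_le_mul (by omega) (Nat.pow_le_pow_right two_pos hjJ.le)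
    omega
  have succ_mul_le : (r + 1) * a ≤ r * b := by linarith [(hR r hr.1).1.2]
  calc ∑ k ∈ Finset.range n, z k
      ≤ ∑ k ∈ Finset.range ((r + 1) * 2 ^ j), z k :=
        Finset.sum_le_sum_of_subset_of_nonneg (Finset.range_subset_range.2 hlt.le)
          fun k _ _ => hz k
    _ ≤ (((r + 1) * 2 ^ j : ℕ) : ℝ) * a := hJ j hJj _ (Finset.mem_Icc.2 (by omega))
    _ = (r + 1) * a * 2 ^ j := by push_cast; ring
    _ ≤ r * b * 2 ^ j := by gcongr
    _ = ((r * 2 ^ j : ℕ) : ℝ) * b := by push_cast; ring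
    _ ≤ n * b := by
      have : 0 ≤ b := ha.trans hab.le
      gcongr

lemma limsup_div_le_of_forall_rat {s : ℕ → ℝ} {μ : EReal}
    (h : ∀ q : ℚ, μ < ((q : ℝ) : EReal) → ∀ᶠ n : ℕ in atTop, s n ≤ n * q) :
    limsup (fun n : ℕ => ((s n / n : ℝ) : EReal)) atTop ≤ μ := by
  by_contra! hlt
  obtain ⟨q, hμq, hq⟩ := EReal.lt_iff_exists_rat_btwn.1 hlt
  refine hq.not_ge (limsup_le_of_le (by isBoundedDefault) ?_)
  filter_upwards [h q hμq, eventually_gt_atTop 0] with n hn hn0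
  rwa [EReal.coe_le_coe_iff, div_le_iff₀' (Nat.cast_pos.2 hn0)]

end RealLemmas

namespace SublinearExp

variable {Ω : Type} (SL : SublinearExp Ω)

section Expectation

variable {f g : Ω → ℝ} {a b : ℝ}

lemma E_add_le_coe (hf : SL.E f ≤ a) (hg : SL.E g ≤ b) :
    SL.E (fun ω => f ω + g ω) ≤ ((a + b : ℝ) : EReal) :=
  (SL.subadd f g).trans (add_le_add hf hg)

lemma E_const_mul_le_coe (hb : 0 ≤ b) (hf : SL.E f ≤ a) :
    SL.E (fun ω => b * f ω) ≤ ((b * a : ℝ) : EReal) := by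
  rw [SL.pos_homog b hb, EReal.coe_mul]
  exact mul_le_mul_of_nonneg_left hf (EReal.coe_nonneg.2 hb)

lemma E_nonneg (hf : ∀ ω, 0 ≤ f ω) : 0 ≤ SL.E f :=
  (SL.const_eq 0).symm.trans_le (SL.mono _ _ hf)

lemma E_ne_bot (f : Ω → ℝ) : SL.E f ≠ ⊥ := by
  intro hf
  have zero_le : ((0 : ℝ) : EReal) ≤ SL.E f + SL.E fun ω => -f ω := by
    simpa only [add_neg_cancel, SL.const_eq] using SL.subadd f fun ω => -f ω
  simp [hf] at zero_le

lemma tendsto_E_max_neg_sub_of_abs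
    (h : Tendsto (fun c : ℝ => SL.E fun ω => max (|f ω| - c) 0) atTop (nhds 0)) :
    Tendsto (fun c : ℝ => SL.E fun ω => max (-f ω - c) 0) atTop (nhds 0) :=
  tendsto_of_tendsto_of_tendsto_of_le_of_le tendsto_const_nhds h
    (fun _ => SL.E_nonneg fun _ => le_max_right _ _)
    fun c => SL.mono _ _ fun ω => max_le_max_right 0 (sub_le_sub_right (neg_le_abs (f ω)) c)

lemma toReal_E_le (hf : SL.E f ≤ a) : (SL.E f).toReal ≤ a :=
  EReal.toReal_le_toReal hf (SL.E_ne_bot f) (EReal.coe_ne_top a)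

lemma coe_toReal_E_of_le_const (hf : ∀ ω, f ω ≤ a) : ((SL.E f).toReal : EReal) = SL.E f :=
  EReal.coe_toReal
    (ne_top_of_le_ne_top (EReal.coe_ne_top a) ((SL.mono _ _ hf).trans_eq (SL.const_eq a)))
    (SL.E_ne_bot f)

end Expectation

section Capacity

variable {A B : Set Ω} {f : Ω → ℝ} {a : ℝ}

lemma E_indicator_one (A : Set Ω) : SL.E (A.indicator fun _ => 1) = (SL.V A : EReal) := by
  have coe_toReal : ((SL.E (A.indicator fun _ => 1)).toReal : EReal) =
      SL.E (A.indicator fun _ => 1) :=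
    SL.coe_toReal_E_of_le_const fun ω => Set.indicator_le_self' (fun _ _ => zero_le_one) ω
  have isLeast : IsLeast {x : ℝ | ∃ ξ : Ω → ℝ,
      (∀ ω, A.indicator (fun _ => (1 : ℝ)) ω ≤ ξ ω) ∧ SL.E ξ = (x : EReal)}
      (SL.E (A.indicator fun _ => 1)).toReal := by
    refine ⟨⟨_, fun _ => le_rfl, coe_toReal.symm⟩, ?_⟩
    rintro x ⟨ξ, hξ, hx⟩
    exact SL.toReal_E_le ((SL.mono _ _ hξ).trans hx.le)
  rw [V, isLeast.csInf_eq, coe_toReal]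

lemma coe_V_le_E (hf : ∀ ω, 0 ≤ f ω) (hA : ∀ ω ∈ A, 1 ≤ f ω) : (SL.V A : EReal) ≤ SL.E f := by
  rw [← SL.E_indicator_one]
  exact SL.mono _ _ fun ω => Set.indicator_apply_le' (hA ω) fun _ => hf ω

lemma V_le_of_E_le (hf : ∀ ω, 0 ≤ f ω) (hA : ∀ ω ∈ A, 1 ≤ f ω) (ha : SL.E f ≤ a) :
    SL.V A ≤ a :=
  EReal.coe_le_coe_iff.1 ((SL.coe_V_le_E hf hA).trans ha)

lemma E_le_coe_V (hf : ∀ ω ∈ A, f ω ≤ 1) (hfA : ∀ ω ∉ A, f ω ≤ 0) : SL.E f ≤ (SL.V A : EReal) := by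
  rw [← SL.E_indicator_one]
  exact SL.mono _ _ fun ω => Set.le_indicator_apply (hf ω) (hfA ω)

lemma V_nonneg (A : Set Ω) : 0 ≤ SL.V A := by
  rw [← EReal.coe_nonneg, ← SL.E_indicator_one]
  exact SL.E_nonneg fun ω => Set.indicator_nonneg (fun _ _ => zero_le_one) ω

lemma V_le_one (A : Set Ω) : SL.V A ≤ 1 :=
  SL.V_le_of_E_le (f := fun _ => 1) (fun _ => zero_le_one) (fun _ _ => le_rfl) (SL.const_eq 1).le

lemma V_empty : SL.V ∅ = 0 :=
  (SL.V_le_of_E_le (f := fun _ => 0) (by simp) (by simp) (SL.const_eq 0).le).antisymm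
    (SL.V_nonneg ∅)

lemma V_mono (h : A ⊆ B) : SL.V A ≤ SL.V B :=
  SL.V_le_of_E_le (fun _ => Set.indicator_nonneg (fun _ _ => zero_le_one) _)
    (fun _ hω => (Set.indicator_of_mem (h hω) fun _ => (1 : ℝ)).ge) (SL.E_indicator_one B).le

lemma V_union_le (A B : Set Ω) : SL.V (A ∪ B) ≤ SL.V A + SL.V B := by
  have indicator_nonneg (C : Set Ω) (ω : Ω) : 0 ≤ C.indicator (fun _ => (1 : ℝ)) ω :=
    Set.indicator_nonneg (fun _ _ => zero_le_one) ω
  refine SL.V_le_of_E_le (fun ω => add_nonneg (indicator_nonneg A ω) (indicator_nonneg B ω)) ?_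
    (SL.E_add_le_coe (SL.E_indicator_one A).le (SL.E_indicator_one B).le)
  rintro ω (hω | hω) <;> rw [Set.indicator_of_mem hω]
  exacts [le_add_of_nonneg_right (indicator_nonneg B ω),
    le_add_of_nonneg_left (indicator_nonneg A ω)]

lemma V_biUnion_finset_le {ι : Type*} (s : Finset ι) (A : ι → Set Ω) :
    SL.V (⋃ i ∈ s, A i) ≤ ∑ i ∈ s, SL.V (A i) := by
  classical
  induction s using Finset.induction_on with
  | empty => simp [SL.V_empty]
  | insert i s hi ih =>
    rw [Finset.set_biUnion_insert, Finset.sum_insert hi]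
    exact (SL.V_union_le _ _).trans (by gcongr)

lemma V_le_exp_neg_mul {S : Ω → ℝ} {t x : ℝ} (ht : 0 ≤ t)
    (ha : SL.E (fun ω => Real.exp (t * S ω)) ≤ a) :
    SL.V {ω | x ≤ S ω} ≤ Real.exp (-(t * x)) * a := by
  refine SL.V_le_of_E_le (fun ω => by positivity) (fun ω (hω : x ≤ S ω) => ?_)
    (SL.E_const_mul_le_coe (Real.exp_pos _).le ha)
  rw [← Real.exp_add, Real.one_le_exp_iff]
  linarith [mul_le_mul_of_nonneg_left hω ht]

end Capacity

section OuterCapacity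

/-- The outer capacity `𝕍*` as an outer measure, so that `∀ᵐ ω ∂SL.outerCapacity, p ω` reads
"`p` holds outside a set of outer capacity zero". -/
def outerCapacity : OuterMeasure Ω :=
  OuterMeasure.ofFunction (fun A => ENNReal.ofReal (SL.V A)) (by simp [SL.V_empty])

lemma outerCapacity_apply (A : Set Ω) : SL.outerCapacity A = SL.Vout A :=
  OuterMeasure.ofFunction_apply _ _ A

lemma ae_eventually_notMem_of_summable {B : ℕ → Set Ω} {u : ℕ → ℝ} (hu : Summable u)
    (hB : ∀ᶠ j in atTop, SL.V (B j) ≤ u j) :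
    ∀ᵐ ω ∂SL.outerCapacity, ∀ᶠ j in atTop, ω ∉ B j := by
  have summable_V : Summable fun j => SL.V (B j) := by
    refine Summable.of_norm_bounded_eventually_nat hu ?_
    filter_upwards [hB] with j hj
    rwa [Real.norm_of_nonneg (SL.V_nonneg _)]
  exact ae_eventually_notMem <| ne_top_of_le_ne_top summable_V.tsum_ofReal_ne_top <|
    ENNReal.tsum_le_tsum fun j => OuterMeasure.ofFunction_le (B j)

end OuterCapacity

section Choquet

variable {SL} {Y W : Ω → ℝ}

lemma Choquet_mono (h : ∀ ω, Y ω ≤ W ω) : SL.Choquet Y ≤ SL.Choquet W :=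
  lintegral_mono fun _ => ENNReal.ofReal_le_ofReal (SL.V_mono fun ω hω => hω.trans (h ω))

lemma Choquet_max_add_const_zero_ne_top (hY : SL.Choquet Y ≠ ⊤) (b : ℝ) :
    SL.Choquet (fun ω => max (Y ω + b) 0) ≠ ⊤ := by
  set F : ℝ → ℝ≥0∞ := fun t => ENNReal.ofReal (SL.V {ω | t ≤ Y ω})
  have eq_shift : SL.Choquet (fun ω => max (Y ω + b) 0) = ∫⁻ t in Set.Ioi 0, F (t - b) := by
    refine setLIntegral_congr_fun measurableSet_Ioi fun t (ht : 0 < t) => ?_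
    simp only [F, le_max_iff, ht.not_ge, or_false, sub_le_iff_le_add]
  have tail_eq : ∫⁻ t in Set.Ioi b, F (t - b) = SL.Choquet Y := by
    have := (measurePreserving_sub_right volume b).setLIntegral_comp_preimage_emb
      (measurableEmbedding_subRight b) F (Set.Ioi 0)
    rwa [Set.preimage_sub_const_Ioi, zero_add] at this
  have head_le : ∫⁻ t in Set.Ioc 0 b, F (t - b) ≤ ENNReal.ofReal b := by
    calc ∫⁻ t in Set.Ioc 0 b, F (t - b) ≤ ∫⁻ _ in Set.Ioc 0 b, 1 :=
          lintegral_mono fun t => ENNReal.ofReal_le_one.2 (SL.V_le_one _)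
      _ = ENNReal.ofReal b := by simp
  have cover : Set.Ioi 0 ⊆ Set.Ioc 0 b ∪ Set.Ioi b := fun t ht =>
    (le_or_gt t b).imp (fun h => ⟨ht, h⟩) id
  rw [eq_shift]
  refine ne_top_of_le_ne_top (ENNReal.add_ne_top.2 ⟨ENNReal.ofReal_ne_top (r := b), hY⟩) ?_
  calc ∫⁻ t in Set.Ioi 0, F (t - b)
      ≤ ∫⁻ t in Set.Ioc 0 b ∪ Set.Ioi b, F (t - b) := lintegral_mono_set cover
    _ ≤ (∫⁻ t in Set.Ioc 0 b, F (t - b)) + ∫⁻ t in Set.Ioi b, F (t - b) := lintegral_union_le _ _ _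
    _ ≤ ENNReal.ofReal b + SL.Choquet Y := add_le_add head_le tail_eq.le

lemma tsum_two_pow_mul_V_le_Choquet (SL : SublinearExp Ω) (Y : Ω → ℝ) :
    ∑' j : ℕ, ENNReal.ofReal (2 ^ j * SL.V {ω | 2 ^ (j + 1) ≤ Y ω}) ≤ SL.Choquet Y := by
  have block_le (j : ℕ) : ENNReal.ofReal (2 ^ j * SL.V {ω | 2 ^ (j + 1) ≤ Y ω}) ≤
      ∫⁻ t in Set.Ioc ((2 : ℝ) ^ j) (2 ^ (j + 1)), ENNReal.ofReal (SL.V {ω | t ≤ Y ω}) := by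
    calc ENNReal.ofReal (2 ^ j * SL.V {ω | 2 ^ (j + 1) ≤ Y ω})
        = ∫⁻ _ in Set.Ioc ((2 : ℝ) ^ j) (2 ^ (j + 1)),
            ENNReal.ofReal (SL.V {ω | 2 ^ (j + 1) ≤ Y ω}) := by
          rw [setLIntegral_const, Real.volume_Ioc, ENNReal.ofReal_mul (by positivity), mul_comm,
            pow_succ, mul_two, add_sub_cancel_right]
      _ ≤ _ := setLIntegral_mono' measurableSet_Ioc fun t ht =>
          ENNReal.ofReal_le_ofReal (SL.V_mono fun ω hω => ht.2.trans hω)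
  have pairwise_disjoint : Pairwise
      (Function.onFun Disjoint fun j : ℕ => Set.Ioc ((2 : ℝ) ^ j) (2 ^ (j + 1))) :=
    (pow_right_mono₀ one_le_two).pairwise_disjoint_on_Ioc_succ
  refine (ENNReal.tsum_le_tsum block_le).trans ?_
  rw [← lintegral_iUnion (fun _ => measurableSet_Ioc) pairwise_disjoint]
  exact lintegral_mono_set <| Set.iUnion_subset fun j t ht =>
    (by positivity : (0 : ℝ) < 2 ^ j).trans ht.1

lemma summable_two_pow_mul_V (hY : SL.Choquet Y ≠ ⊤) :
    Summable fun j : ℕ => 2 ^ j * SL.V {ω | 2 ^ j ≤ Y ω} := by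
  rw [← summable_nat_add_iff 1]
  have summable_half := ENNReal.summable_toReal
    (ne_top_of_le_ne_top hY (SL.tsum_two_pow_mul_V_le_Choquet Y))
  refine (summable_half.mul_left 2).congr fun j => ?_
  rw [ENNReal.toReal_ofReal (mul_nonneg (by positivity) (SL.V_nonneg _))]
  ring

variable (SL) in
/-- The truncated second moment `𝔼[(W ∧ c)²]` as a real number; meaningful for `0 ≤ W`, where
the expectation is finite. -/
def truncSq (W : Ω → ℝ) (c : ℝ) : ℝ := (SL.E fun ω => min (W ω) c ^ 2).toReal

lemma coe_truncSq (hW : ∀ ω, 0 ≤ W ω) {c : ℝ} (hc : 0 ≤ c) :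
    (SL.truncSq W c : EReal) = SL.E fun ω => min (W ω) c ^ 2 :=
  SL.coe_toReal_E_of_le_const (a := c ^ 2) fun ω =>
    pow_le_pow_left₀ (le_min (hW ω) hc) (min_le_right _ _) 2

lemma truncSq_nonneg (W : Ω → ℝ) (c : ℝ) : 0 ≤ SL.truncSq W c :=
  EReal.toReal_nonneg (SL.E_nonneg fun _ => sq_nonneg _)

lemma truncSq_le_add (hW : ∀ ω, 0 ≤ W ω) {c d : ℝ} (hc : 0 ≤ c) (hcd : c ≤ d) :
    SL.truncSq W d ≤ SL.truncSq W c + d ^ 2 * SL.V {ω | c ≤ W ω} := by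
  have pointwise (ω : Ω) : min (W ω) d ^ 2 ≤
      min (W ω) c ^ 2 + d ^ 2 * {ω | c ≤ W ω}.indicator (fun _ => 1) ω := by
    by_cases hω : c ≤ W ω
    · rw [Set.indicator_of_mem (by exact hω), mul_one]
      exact (pow_le_pow_left₀ (le_min (hW ω) (hc.trans hcd)) (min_le_right _ _) 2).trans
        (le_add_of_nonneg_left (sq_nonneg _))
    · rw [Set.indicator_of_notMem (by exact hω), mul_zero, add_zero, min_eq_left (not_le.1 hω).le,
        min_eq_left ((not_le.1 hω).le.trans hcd)]
  exact SL.toReal_E_le ((SL.mono _ _ pointwise).trans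
    (SL.E_add_le_coe (coe_truncSq hW hc).ge
      (SL.E_const_mul_le_coe (sq_nonneg d) (SL.E_indicator_one _).le)))

lemma summable_truncSq_div_two_pow (hW : ∀ ω, 0 ≤ W ω) (hCh : SL.Choquet W ≠ ⊤) :
    Summable fun j : ℕ => SL.truncSq W (2 ^ j) / 2 ^ j := by
  have tail_nonneg (j : ℕ) : 0 ≤ 2 * (2 ^ j * SL.V {ω | 2 ^ j ≤ W ω}) :=
    mul_nonneg zero_le_two (mul_nonneg (by positivity) (SL.V_nonneg _))
  refine summable_of_succ_le_mul_add (fun j => div_nonneg (truncSq_nonneg W _) (by positivity))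
    ((summable_two_pow_mul_V hCh).mul_left 2) tail_nonneg (by norm_num : (1 / 2 : ℝ) < 1)
    fun j => ?_
  have succ_le := truncSq_le_add (SL := SL) hW (by positivity : (0 : ℝ) ≤ 2 ^ j)
    (pow_le_pow_right₀ one_le_two j.le_succ)
  calc SL.truncSq W (2 ^ (j + 1)) / 2 ^ (j + 1)
      ≤ (SL.truncSq W (2 ^ j) + (2 ^ (j + 1)) ^ 2 * SL.V {ω | 2 ^ j ≤ W ω}) / 2 ^ (j + 1) := by
        gcongr
    _ = 1 / 2 * (SL.truncSq W (2 ^ j) / 2 ^ j) + 2 * (2 ^ j * SL.V {ω | 2 ^ j ≤ W ω}) := by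
        field_simp
        ring

end Choquet

section TestFunctions

lemma IsBLip.isLocLip {g : ℝ → ℝ} (hg : IsBLip g) : IsLocLip g := by
  obtain ⟨⟨L, hL⟩, -⟩ := hg
  refine ⟨L, 0, fun x y => ?_⟩
  have lipschitz : |g x - g y| ≤ L * |x - y| := hL.dist_le_mul x y
  have : 0 ≤ L * |x - y| := by positivity
  simp only [pow_zero]
  linarith

lemma IsBLip.comp {g f : ℝ → ℝ} {L : ℝ≥0} (hg : IsBLip g) (hf : LipschitzWith L f) :
    IsBLip (g ∘ f) :=
  ⟨hg.1.imp' (· * L) fun _ h => h.comp hf, hg.2.imp fun _ h x => h (f x)⟩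

lemma isBLip_exp_comp {f : ℝ → ℝ} {L : ℝ≥0} {M : ℝ} (hf : LipschitzWith L f) (hM : ∀ x, f x ≤ M) :
    IsBLip fun x => Real.exp (f x) := by
  refine ⟨⟨_, lipschitzOnWith_univ.1 <|
    (lipschitzOnWith_exp_Iic M).comp hf.lipschitzOnWith fun x _ => hM x⟩, Real.exp M, fun x => ?_⟩
  rw [Real.abs_exp]
  exact Real.exp_le_exp.2 (hM x)

lemma isBLip_ramp (a b : ℝ) : IsBLip fun x => min (max ((x - a) / (b - a)) 0) 1 := by
  refine ⟨⟨‖(b - a)⁻¹‖₊, ?_⟩, 1, fun x => ?_⟩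
  · refine ((LipschitzWith.of_dist_le_mul fun x y => ?_).max_const 0).min_const 1
    rw [Real.dist_eq, Real.dist_eq, coe_nnnorm, Real.norm_eq_abs, ← sub_div,
      sub_sub_sub_cancel_right, div_eq_inv_mul, abs_mul]
  · rw [abs_of_nonneg (le_min (le_max_right _ _) zero_le_one)]
    exact min_le_right _ _

end TestFunctions

/-- Every `X k` is stochastically dominated by `Y`, in the sense that `𝔼[g(X_k)] ≤ 𝔼[g(Y)]` for
the test functions `g` of `UEND`; the form in which identical distribution enters the strong law. -/
def StochDominated (X : ℕ → Ω → ℝ) (Y : Ω → ℝ) : Prop :=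
  ∀ (k : ℕ) (g : ℝ → ℝ), IsBLip g → Monotone g → (∀ x, 0 ≤ g x) →
    SL.E (fun ω => g (X k ω)) ≤ SL.E fun ω => g (Y ω)

section Dependence

variable {SL} {X Z : ℕ → Ω → ℝ} {Y W : Ω → ℝ} {K : ℝ}

lemma IdentDist.stochDominated (h : IdentDist SL X) : StochDominated SL X (X 0) :=
  fun k g hg _ _ => (h k g hg.isLocLip).le

lemma StochDominated.comp {f : ℝ → ℝ} {L : ℝ≥0} (h : StochDominated SL X Y)
    (hf : LipschitzWith L f) (hmono : Monotone f) :
    StochDominated SL (fun k ω => f (X k ω)) fun ω => f (Y ω) :=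
  fun k g hg hgm hg0 => h k (g ∘ f) (hg.comp hf) (hgm.comp hmono) fun x => hg0 (f x)

lemma UEND.comp {f : ℝ → ℝ} {L : ℝ≥0} (h : UEND SL K X) (hf : LipschitzWith L f)
    (hmono : Monotone f) : UEND SL K fun k ω => f (X k ω) :=
  fun n g hg hgm hg0 => h n (fun k => g k ∘ f) (fun k => (hg k).comp hf)
    (fun k => (hgm k).comp hmono) fun k x => hg0 k (f x)

lemma UEND.one_le (h : UEND SL K X) : 1 ≤ K := by
  have empty_prod := h 0 (fun _ _ => 0) (fun _ => ⟨⟨0, LipschitzWith.const 0⟩, 0, by simp⟩)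
    (fun _ => monotone_const) fun _ _ => le_rfl
  simpa only [Finset.range_zero, Finset.prod_empty, mul_one, SL.const_eq,
    EReal.coe_le_coe_iff] using empty_prod

-- `{b ≤ ·}` is not a test function, so the domination costs a ramp between the levels.
lemma StochDominated.V_le (h : StochDominated SL X Y) {a b : ℝ} (hab : a < b) (k : ℕ) :
    SL.V {ω | b ≤ X k ω} ≤ SL.V {ω | a ≤ Y ω} := by
  have hba : 0 < b - a := sub_pos.2 hab
  set ramp : ℝ → ℝ := fun x => min (max ((x - a) / (b - a)) 0) 1
  have ramp_nonneg (x : ℝ) : 0 ≤ ramp x := le_min (le_max_right _ _) zero_le_one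
  have ramp_mono : Monotone ramp := fun x y hxy => by simp only [ramp]; gcongr
  refine SL.V_le_of_E_le (fun ω => ramp_nonneg (X k ω)) (fun ω hω => ?_)
    ((h k ramp (isBLip_ramp a b) ramp_mono ramp_nonneg).trans
      (SL.E_le_coe_V (fun ω _ => min_le_right _ _) fun ω hω => ?_))
  · exact le_min (le_max_of_le_left <| (one_le_div hba).2 (sub_le_sub_right hω a)) le_rfl
  · exact (min_le_left _ _).trans <| max_le
      (div_nonpos_of_nonpos_of_nonneg (sub_nonpos.2 (not_le.1 hω).le) hba.le) le_rfl

lemma UEND.E_exp_sum_le (hU : UEND SL K X) (hdom : StochDominated SL X Y) {f : ℝ → ℝ} {L : ℝ≥0}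
    {M a : ℝ} (hf : LipschitzWith L f) (hmono : Monotone f) (hM : ∀ x, f x ≤ M)
    (ha : SL.E (fun ω => Real.exp (f (Y ω))) ≤ ((1 + a : ℝ) : EReal)) (n : ℕ) :
    SL.E (fun ω => Real.exp (∑ k ∈ Finset.range n, f (X k ω))) ≤
      ((K * Real.exp (n * a) : ℝ) : EReal) := by
  have hg : IsBLip fun x => Real.exp (f x) := isBLip_exp_comp hf hM
  have hgm : Monotone fun x => Real.exp (f x) := Real.exp_monotone.comp hmono
  have hg0 (x : ℝ) : 0 ≤ Real.exp (f x) := (Real.exp_pos _).le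
  have factor_le (k : ℕ) : (SL.E fun ω => Real.exp (f (X k ω))).toReal ≤ Real.exp a :=
    (SL.toReal_E_le ((hdom k _ hg hgm hg0).trans ha)).trans
      (by linarith [Real.add_one_le_exp a])
  simp only [Real.exp_sum]
  refine (hU n _ (fun _ => hg) (fun _ => hgm) fun _ => hg0).trans (EReal.coe_le_coe_iff.2 ?_)
  refine mul_le_mul_of_nonneg_left ?_ (zero_le_one.trans hU.one_le)
  calc ∏ k ∈ Finset.range n, (SL.E fun ω => Real.exp (f (X k ω))).toReal
      ≤ ∏ _k ∈ Finset.range n, Real.exp a := Finset.prod_le_prod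
        (fun k _ => EReal.toReal_nonneg (SL.E_nonneg fun ω => hg0 (X k ω)))
        fun k _ => factor_le k
    _ = Real.exp (n * a) := by rw [Finset.prod_const, Finset.card_range, ← Real.exp_nat_mul]

lemma E_exp_mul_min_le (hW : ∀ ω, 0 ≤ W ω) {c m q t : ℝ} (hc : 0 ≤ c) (ht : 0 ≤ t)
    (hm : SL.E W ≤ m) (hq : SL.E (fun ω => min (W ω) c ^ 2) ≤ q) :
    SL.E (fun ω => Real.exp (t * min (W ω) c)) ≤
      ((1 + (t * m + t ^ 2 * Real.exp (t * c) * q) : ℝ) : EReal) := by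
  have pointwise (ω : Ω) : Real.exp (t * min (W ω) c) ≤
      1 + (t * W ω + t ^ 2 * Real.exp (t * c) * min (W ω) c ^ 2) := by
    have taylor := exp_le_one_add_add_sq_mul_exp (mul_nonneg ht (le_min (hW ω) hc))
      (mul_le_mul_of_nonneg_left (min_le_right (W ω) c) ht)
    have := mul_le_mul_of_nonneg_left (min_le_left (W ω) c) ht
    linarith
  exact (SL.mono _ _ pointwise).trans <| SL.E_add_le_coe (SL.const_eq 1).le <|
    SL.E_add_le_coe (SL.E_const_mul_le_coe ht hm) (SL.E_const_mul_le_coe (by positivity) hq)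

lemma UEND.V_le_sum_min_le_exp (hU : UEND SL K Z) (hdom : StochDominated SL Z W)
    (hW : ∀ ω, 0 ≤ W ω) {c m q t : ℝ} (hc : 0 ≤ c) (ht : 0 ≤ t) (hm : SL.E W ≤ m)
    (hq : SL.E (fun ω => min (W ω) c ^ 2) ≤ q) (n : ℕ) (x : ℝ) :
    SL.V {ω | x ≤ ∑ k ∈ Finset.range n, min (Z k ω) c} ≤
      K * Real.exp (n * (t * m + t ^ 2 * Real.exp (t * c) * q) - t * x) := by
  have lipschitz : LipschitzWith (‖t‖₊ * 1) fun x : ℝ => t * min x c :=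
    (lipschitzWith_smul t).comp (LipschitzWith.id.min_const c)
  have mono : Monotone fun x : ℝ => t * min x c := fun x y hxy => by dsimp only; gcongr
  have exp_moment := hU.E_exp_sum_le hdom lipschitz mono
    (fun x => mul_le_mul_of_nonneg_left (min_le_right x c) ht) (E_exp_mul_min_le hW hc ht hm hq) n
  simp only [← Finset.mul_sum] at exp_moment
  refine (SL.V_le_exp_neg_mul ht exp_moment).trans_eq ?_
  rw [mul_left_comm, ← Real.exp_add, neg_add_eq_sub]

lemma UEND.V_le_sum_min_le_mul (hU : UEND SL K Z) (hdom : StochDominated SL Z W)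
    (hW : ∀ ω, 0 ≤ W ω) {c m Q ε : ℝ} (hc : 0 < c) (hQ0 : 0 < Q) (hQ1 : Q ≤ 1) (hm : SL.E W ≤ m)
    (hq : SL.E (fun ω => min (W ω) c ^ 2) ≤ ((Q * c : ℝ) : EReal)) {n r : ℕ}
    (hn : (n : ℝ) = r * c) (hr : 2 ≤ r * ε) :
    SL.V {ω | n * (m + ε) ≤ ∑ k ∈ Finset.range n, min (Z k ω) c} ≤ K * Real.exp (2 * r) * Q := by
  -- With `t = s / c`, the choice `Q = exp (-2s)` makes the second-order term at most `2r`.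
  obtain ⟨s, hs, rfl⟩ : ∃ s : ℝ, 0 ≤ s ∧ Q = Real.exp (-(2 * s)) := by
    refine ⟨-(Real.log Q / 2), by linarith [Real.log_nonpos hQ0.le hQ1], ?_⟩
    rw [show -(2 * -(Real.log Q / 2)) = Real.log Q by ring, Real.exp_log hQ0]
  refine (hU.V_le_sum_min_le_exp hdom hW hc.le (div_nonneg hs hc.le) hm hq n _).trans ?_
  rw [mul_assoc K, ← Real.exp_add, div_mul_cancel₀ _ hc.ne']
  refine mul_le_mul_of_nonneg_left (Real.exp_le_exp.2 ?_) (zero_le_one.trans hU.one_le)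
  calc n * (s / c * m + (s / c) ^ 2 * Real.exp s * (Real.exp (-(2 * s)) * c)) -
        s / c * (n * (m + ε))
      = r * (s ^ 2 * Real.exp s * Real.exp (-(2 * s))) - s * (r * ε) := by
        rw [hn]
        field_simp
        ring
    _ ≤ r * 2 - s * 2 := by
        gcongr
        exact sq_mul_exp_mul_exp_neg_two_mul_le hs
    _ = 2 * r + -(2 * s) := by ring

lemma StochDominated.V_le_sum_le_add (hdom : StochDominated SL Z W) {a c : ℝ} (hac : a < c)
    (n : ℕ) (x : ℝ) :
    SL.V {ω | x ≤ ∑ k ∈ Finset.range n, Z k ω} ≤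
      n * SL.V {ω | a ≤ W ω} + SL.V {ω | x ≤ ∑ k ∈ Finset.range n, min (Z k ω) c} := by
  have cover : {ω | x ≤ ∑ k ∈ Finset.range n, Z k ω} ⊆
      (⋃ k ∈ Finset.range n, {ω | c ≤ Z k ω}) ∪
        {ω | x ≤ ∑ k ∈ Finset.range n, min (Z k ω) c} := by
    intro ω hω
    by_cases hbig : ∃ k ∈ Finset.range n, c ≤ Z k ω
    · exact Or.inl (by simpa using hbig)
    · push Not at hbig
      exact Or.inr (hω.trans_eq (Finset.sum_congr rfl fun k hk =>
        (min_eq_left (hbig k hk).le).symm))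
  refine (SL.V_mono cover).trans ((SL.V_union_le _ _).trans ?_)
  gcongr
  calc SL.V (⋃ k ∈ Finset.range n, {ω | c ≤ Z k ω})
      ≤ ∑ k ∈ Finset.range n, SL.V {ω | c ≤ Z k ω} := SL.V_biUnion_finset_le _ _
    _ ≤ ∑ _k ∈ Finset.range n, SL.V {ω | a ≤ W ω} := Finset.sum_le_sum fun k _ => hdom.V_le hac k
    _ = n * SL.V {ω | a ≤ W ω} := by rw [Finset.sum_const, Finset.card_range, nsmul_eq_mul]

end Dependence

section StrongLaw

variable {SL} {X Z : ℕ → Ω → ℝ} {Y W : Ω → ℝ} {K : ℝ}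

lemma UEND.ae_eventually_dyadic_sum_lt (hU : UEND SL K Z) (hdom : StochDominated SL Z W)
    (hW : ∀ ω, 0 ≤ W ω) (hCh : SL.Choquet W ≠ ⊤) {m ε : ℝ} (hm : SL.E W ≤ m) {r : ℕ}
    (hr : 2 ≤ r * ε) :
    ∀ᵐ ω ∂SL.outerCapacity, ∀ᶠ j : ℕ in atTop,
      ∑ k ∈ Finset.range (r * 2 ^ j), Z k ω < ((r * 2 ^ j : ℕ) : ℝ) * (m + ε) := by
  set tail : ℕ → ℝ := fun j => 2 ^ j * SL.V {ω | 2 ^ j ≤ W ω}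
  -- The summand `1` keeps `Q j` positive.
  set Q : ℕ → ℝ := fun j => (1 + SL.truncSq W (2 ^ j)) / 2 ^ j
  have Q_pos (j : ℕ) : 0 < Q j :=
    div_pos (add_pos_of_pos_of_nonneg one_pos (truncSq_nonneg W _)) (by positivity)
  have summable_Q : Summable Q := by
    refine (summable_geometric_two.add (summable_truncSq_div_two_pow hW hCh)).congr fun j => ?_
    simp only [Q, add_div, div_pow, one_pow]
  have truncSq_le (j : ℕ) :
      SL.E (fun ω => min (W ω) (2 ^ j) ^ 2) ≤ ((Q j * 2 ^ j : ℝ) : EReal) := by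
    rw [← coe_truncSq hW (by positivity), EReal.coe_le_coe_iff, div_mul_cancel₀ _ (by positivity)]
    linarith
  have summable_bound : Summable fun j =>
      2 * r * tail (j - 1) + K * Real.exp (2 * r) * Q j := by
    refine Summable.add (Summable.mul_left _ ?_) (summable_Q.mul_left _)
    rw [← summable_nat_add_iff 1]
    exact summable_two_pow_mul_V hCh
  suffices ∀ᶠ j in atTop, SL.V {ω | ((r * 2 ^ j : ℕ) : ℝ) * (m + ε) ≤
      ∑ k ∈ Finset.range (r * 2 ^ j), Z k ω} ≤ 2 * r * tail (j - 1) + K * Real.exp (2 * r) * Q j by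
    filter_upwards [SL.ae_eventually_notMem_of_summable summable_bound this] with ω hω
    exact hω.mono fun j hj => not_le.1 hj
  filter_upwards [summable_Q.tendsto_atTop_zero.eventually_le_const zero_lt_one,
    eventually_ge_atTop 1] with j hQ1 hj
  obtain ⟨i, rfl⟩ := Nat.exists_eq_add_of_le' hj
  refine (hdom.V_le_sum_le_add (pow_lt_pow_right₀ one_lt_two i.lt_succ_self) _ _).trans
    (add_le_add (le_of_eq ?_) (hU.V_le_sum_min_le_mul hdom hW (by positivity) (Q_pos _) hQ1 hm
      (truncSq_le _) (by push_cast; ring) hr))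
  simp only [tail, Nat.add_sub_cancel]
  push_cast
  ring

lemma UEND.ae_eventually_sum_le_of_nonneg (hU : UEND SL K Z) (hdom : StochDominated SL Z W)
    (hZ : ∀ k ω, 0 ≤ Z k ω) (hW : ∀ ω, 0 ≤ W ω) (hCh : SL.Choquet W ≠ ⊤) {y : ℝ}
    (hy : SL.E W < y) :
    ∀ᵐ ω ∂SL.outerCapacity, ∀ᶠ n : ℕ in atTop, ∑ k ∈ Finset.range n, Z k ω ≤ n * y := by
  obtain ⟨m, hm, hmy⟩ := EReal.lt_iff_exists_real_btwn.1 hy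
  obtain ⟨y', hmy', hy'⟩ := exists_between (EReal.coe_lt_coe_iff.1 hmy)
  have m_nonneg : 0 ≤ m := EReal.coe_nonneg.1 ((SL.E_nonneg hW).trans hm.le)
  have eventually_two_le : ∀ᶠ r : ℕ in atTop, 2 ≤ r * (y' - m) :=
    (tendsto_natCast_atTop_atTop.atTop_mul_const (sub_pos.2 hmy')).eventually_ge_atTop 2
  have dyadic : ∀ᵐ ω ∂SL.outerCapacity, ∀ r : ℕ, 2 ≤ r * (y' - m) → ∀ᶠ j : ℕ in atTop,
      ∑ k ∈ Finset.range (r * 2 ^ j), Z k ω < ((r * 2 ^ j : ℕ) : ℝ) * y' := by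
    refine ae_all_iff.2 fun r => ae_all_iff.2 fun hr => ?_
    simpa only [add_sub_cancel] using hU.ae_eventually_dyadic_sum_lt hdom hW hCh hm.le hr
  filter_upwards [dyadic] with ω hω
  exact eventually_sum_range_le_of_dyadic (hZ · ω) (m_nonneg.trans hmy'.le) hy' <|
    eventually_two_le.mono fun r hr => (hω r hr).mono fun j hj => hj.le

lemma UEND.ae_eventually_sum_le (hU : UEND SL K X) (hdom : StochDominated SL X Y)
    (hneg : Tendsto (fun c : ℝ => SL.E fun ω => max (-Y ω - c) 0) atTop (nhds 0))
    (hCh : SL.Choquet Y ≠ ⊤) {y : ℝ} (hy : SL.E Y < y) :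
    ∀ᵐ ω ∂SL.outerCapacity, ∀ᶠ n : ℕ in atTop, ∑ k ∈ Finset.range n, X k ω ≤ n * y := by
  obtain ⟨m, hm, hmy⟩ := EReal.lt_iff_exists_real_btwn.1 hy
  obtain ⟨δ, hδ, hδy⟩ := exists_between (sub_pos.2 (EReal.coe_lt_coe_iff.1 hmy))
  obtain ⟨b, hb⟩ := (hneg.eventually_lt_const (EReal.coe_pos.2 hδ)).exists
  have E_lt : SL.E (fun ω => max (Y ω + b) 0) < ((y + b : ℝ) : EReal) := by
    have split (ω : Ω) : max (Y ω + b) 0 ≤ Y ω + b + max (-Y ω - b) 0 := by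
      grind
    refine ((SL.mono _ _ split).trans
      (SL.E_add_le_coe (SL.E_add_le_coe hm.le (SL.const_eq b).le) hb.le)).trans_lt ?_
    rw [EReal.coe_lt_coe_iff]
    linarith
  have lipschitz : LipschitzWith 1 fun x : ℝ => max (x + b) 0 :=
    (LipschitzWith.of_dist_le_mul (by simp)).max_const 0
  have mono : Monotone fun x : ℝ => max (x + b) 0 := fun x y hxy => by dsimp only; gcongr
  filter_upwards [(hU.comp lipschitz mono).ae_eventually_sum_le_of_nonneg
    (hdom.comp lipschitz mono) (fun _ _ => le_max_right _ _) (fun _ => le_max_right _ _)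
    (Choquet_max_add_const_zero_ne_top hCh b) E_lt] with ω hω
  filter_upwards [hω] with n hn
  have shift : ∑ k ∈ Finset.range n, X k ω + n * b = ∑ k ∈ Finset.range n, (X k ω + b) := by
    simp [Finset.sum_add_distrib]
  have : ∑ k ∈ Finset.range n, (X k ω + b) ≤ ∑ k ∈ Finset.range n, max (X k ω + b) 0 :=
    Finset.sum_le_sum fun k _ => le_max_left _ _
  linarith

end StrongLaw

end SublinearExp

theorem stmt7_general {Ω : Type} (SL : SublinearExp Ω) (X : ℕ → Ω → ℝ) (Y : Ω → ℝ) (K : ℝ)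
    (hdom : SublinearExp.StochDominated SL X Y) (hUEND : SublinearExp.UEND SL K X)
    (hneg : Tendsto (fun c : ℝ => SL.E fun ω => max (-Y ω - c) 0) atTop (nhds (0 : EReal)))
    (hCh : SL.Choquet Y ≠ ⊤) :
    SL.Vout {ω | SL.E Y <
      limsup (fun n : ℕ => (((∑ k ∈ Finset.range n, X k ω) / n : ℝ) : EReal))
        atTop} = 0 := by
  have sum_le : ∀ᵐ ω ∂SL.outerCapacity, ∀ q : ℚ, SL.E Y < ((q : ℝ) : EReal) →
      ∀ᶠ n : ℕ in atTop, ∑ k ∈ Finset.range n, X k ω ≤ n * q :=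
    ae_all_iff.2 fun _ => ae_all_iff.2 fun hq => hUEND.ae_eventually_sum_le hdom hneg hCh hq
  have limsup_le : ∀ᵐ ω ∂SL.outerCapacity,
      limsup (fun n : ℕ => (((∑ k ∈ Finset.range n, X k ω) / n : ℝ) : EReal)) atTop ≤ SL.E Y :=
    sum_le.mono fun _ hω => limsup_div_le_of_forall_rat hω
  simpa only [ae_iff, not_le, SL.outerCapacity_apply] using limsup_le

/-- Theorem 4.3(a), first part: strong law of large numbers (upper half) for
upper extended negatively dependent, identically distributed random variables. -/
theorem stmt7 {Ω : Type} (SL : SublinearExp Ω) (X : ℕ → Ω → ℝ)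
    (K : ℝ) (hK : 1 ≤ K)
    (hid : SublinearExp.IdentDist SL X)
    (hUEND : SublinearExp.UEND SL K X)
    (hunif : Tendsto (fun c : ℝ => SL.E fun ω => max (|X 0 ω| - c) 0)
      atTop (nhds (0 : EReal)))
    (hCh : SL.Choquet (fun ω => |X 0 ω|) ≠ ⊤) :
    SL.Vout {ω | SL.E (X 0) <
      limsup (fun n : ℕ => (((∑ k ∈ Finset.range n, X k ω) / n : ℝ) : EReal))
        atTop} = 0 := by
  exact stmt7_general SL X (X 0) K hid.stochDominated hUEND (SL.tendsto_E_max_neg_sub_of_abs hunif)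
    (ne_top_of_le_ne_top hCh (SublinearExp.Choquet_mono fun _ => le_abs_self _))
end
end

section
/- Let X_1, X_2, … be identically distributed real random variables on a probability space (Ω, ℱ, P) which are extended negatively dependent with some dominating constant K ≥ 1, and set S_n = Σ_{k=1}^n X_k. If E[|X_1|] < ∞, then P( S_n/n → E[X_1] as n → ∞ ) = 1. -/
open Filter MeasureTheory
open scoped ENNReal NNReal

noncomputable section

/-- Extended negative dependence (classical, on a probability space) with
dominating constant `K`: the joint lower-left and upper-right tails are
dominated by `K` times the product of the marginal tails. -/
def ENDProb {Ω : Type} [MeasurableSpace Ω] (P : Measure Ω) (K : ℝ)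
    (X : ℕ → Ω → ℝ) : Prop :=
  ∀ (n : ℕ) (x : ℕ → ℝ),
    (P (⋂ i ∈ Finset.range n, {ω | X i ω ≤ x i}) ≤
      ENNReal.ofReal K * ∏ i ∈ Finset.range n, P {ω | X i ω ≤ x i}) ∧
    (P (⋂ i ∈ Finset.range n, {ω | x i < X i ω}) ≤
      ENNReal.ofReal K * ∏ i ∈ Finset.range n, P {ω | x i < X i ω})

open ProbabilityTheory

/-!
Extended negative dependence is preserved by `X ↦ -X`, so it suffices to show that
`limsup S_n / n ≤ E X`. Truncating `X` from below and adding a constant reduces the bound to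
nonnegative variables `Z`. Upper-orthant dependence dominates the joint tails, hence by the
layer-cake formula also the product of exponential moments, by `C` times those of independent
copies, so the exponential Chebyshev inequality survives with an extra factor `C`. For variables
truncated at level `b`, Bennett's choice of the exponent bounds the probability that `∑ Z i` exceeds
its mean by `b` by a multiple of `(∑ i, E (min (Z i) b) ^ 2) / b ^ 2`. With `⌊c ^ k⌋` summands and
`b = ε * c ^ k` these bounds are summable over `k` as soon as `E Z < ∞`. Borel–Cantelli then
controls the sums along geometric times, and monotonicity of the partial sums fills the gaps at the
cost of a factor `c`.
-/

section OrthantDependence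

variable {Ω : Type*} [MeasurableSpace Ω] {P : Measure Ω} {ι : Type*} [Fintype ι]

-- The unions over all choices `g` of one set per coordinate are directed, so `P` is continuous
-- from below along them.
theorem measure_iInter_iUnion_le_mul_prod {C : ℝ≥0∞} {κ : ι → Type*} [∀ i, SemilatticeInf (κ i)]
    [∀ i, Countable (κ i)] {A : ∀ i, κ i → Set Ω} (hA : ∀ i, Antitone (A i))
    (h : ∀ g : ∀ i, κ i, P (⋂ i, A i (g i)) ≤ C * ∏ i, P (A i (g i))) :
    P (⋂ i, ⋃ q, A i q) ≤ C * ∏ i, P (⋃ q, A i q) := by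
  have hanti : Antitone fun g : ∀ i, κ i => ⋂ i, A i (g i) := fun g g' hg =>
    Set.iInter_mono fun i => hA i (hg i)
  have hdistrib : ⋂ i, ⋃ q, A i q = ⋃ g : ∀ i, κ i, ⋂ i, A i (g i) := by
    ext ω
    simp only [Set.mem_iInter, Set.mem_iUnion, Classical.skolem]
  rw [hdistrib, hanti.measure_iUnion]
  refine iSup_le fun g => (h g).trans ?_
  gcongr with i
  exact Set.subset_iUnion (A i) (g i)

/-- The upper-orthant half of extended negative dependence, for a finite family: the probability
that all the variables exceed given thresholds is at most `C` times what it would be for independent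
variables with the same marginals. The lower-orthant half is this condition for the negated
variables. -/
def UpperEND (P : Measure Ω) (C : ℝ≥0) (W : ι → Ω → ℝ) : Prop :=
  ∀ x : ι → ℝ, P (⋂ i, {ω | x i < W i ω}) ≤ C * ∏ i, P {ω | x i < W i ω}

theorem UpperEND.comp_monotone {C : ℝ≥0} {W : ι → Ω → ℝ} (hW : UpperEND P C W) {f : ι → ℝ → ℝ}
    (hf : ∀ i, Monotone (f i)) (hfc : ∀ i, Continuous (f i)) :
    UpperEND P C fun i ω => f i (W i ω) := by
  intro x
  have hunion (i) : {ω | x i < f i (W i ω)} = ⋃ q : {q : ℚ // x i < f i q}, {ω | q < W i ω} := by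
    ext ω
    simp only [Set.mem_ofPred_eq, Set.mem_iUnion, Subtype.exists, exists_prop]
    refine ⟨fun hω => ?_, fun ⟨q, hxq, hq⟩ => hxq.trans_le (hf i hq.le)⟩
    obtain ⟨a, hxa, haW⟩ := ((((hfc i).tendsto (W i ω)).eventually_const_lt hω).filter_mono
      nhdsWithin_le_nhds).and (self_mem_nhdsWithin (s := Set.Iio (W i ω))) |>.exists
    obtain ⟨q, haq, hqW⟩ := exists_rat_btwn haW
    exact ⟨q, hxa.trans_le (hf i haq.le), hqW⟩
  simp_rw [hunion]
  exact measure_iInter_iUnion_le_mul_prod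
    (fun i q q' hq ω (hω : q' < W i ω) => (Rat.cast_le.2 hq).trans_lt hω) fun g => hW fun i => g i

theorem lintegral_prod_ofReal_eq_lintegral_measure_lt [SFinite P] {W : ι → Ω → ℝ}
    (hW : ∀ i, AEMeasurable (W i) P) :
    ∫⁻ ω, ∏ i, ENNReal.ofReal (W i ω) ∂P =
      ∫⁻ x, P (⋂ i, {ω | x i < W i ω}) ∂Measure.pi fun _ : ι => volume.restrict (Set.Ioi 0) := by
  set ν := Measure.pi fun _ : ι => (volume : Measure ℝ).restrict (Set.Ioi 0)
  set S : Set (Ω × (ι → ℝ)) := ⋂ i, {p | p.2 i < W i p.1}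
  have hS : NullMeasurableSet S (P.prod ν) := .iInter fun i =>
    nullMeasurableSet_lt (by fun_prop) ((hW i).comp_fst)
  have hbox (ω) : ∏ i, ENNReal.ofReal (W i ω) = ν {x | (ω, x) ∈ S} := by
    have hpi : {x | (ω, x) ∈ S} = Set.univ.pi fun i => Set.Iio (W i ω) := by
      ext x
      simp [S]
    simp [hpi, ν, Measure.pi_pi, Set.Iio_inter_Ioi]
  calc ∫⁻ ω, ∏ i, ENNReal.ofReal (W i ω) ∂P
      = ∫⁻ ω, ∫⁻ x, S.indicator 1 (ω, x) ∂ν ∂P := lintegral_congr fun ω => by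
        have hmeas : MeasurableSet {x | (ω, x) ∈ S} := by
          simp only [S, Set.mem_iInter, Set.mem_ofPred_eq]
          measurability
        rw [hbox, ← lintegral_indicator_one hmeas]
        rfl
    _ = ∫⁻ x, ∫⁻ ω, S.indicator 1 (ω, x) ∂P ∂ν :=
        lintegral_lintegral_swap (aemeasurable_one.indicator₀ hS)
    _ = ∫⁻ x, P (⋂ i, {ω | x i < W i ω}) ∂ν := lintegral_congr fun x => by
        have hsection : {ω | (ω, x) ∈ S} = ⋂ i, {ω | x i < W i ω} := by
          ext ω
          simp [S]
        have hmeas : NullMeasurableSet {ω | (ω, x) ∈ S} P := by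
          rw [hsection]
          exact .iInter fun i => nullMeasurableSet_lt aemeasurable_const (hW i)
        rw [← hsection]
        exact lintegral_indicator_one₀ hmeas

-- The right-hand side is the expectation for independent copies of the variables, so the layer-cake
-- formula reduces the claim to the defining inequality at each threshold vector.
theorem UpperEND.lintegral_prod_ofReal_le {C : ℝ≥0} [IsProbabilityMeasure P] {W : ι → Ω → ℝ}
    (h : UpperEND P C W) (hW : ∀ i, AEMeasurable (W i) P) :
    ∫⁻ ω, ∏ i, ENNReal.ofReal (W i ω) ∂P ≤ C * ∏ i, ∫⁻ ω, ENNReal.ofReal (W i ω) ∂P := by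
  have hprob (i) : IsProbabilityMeasure (P.map (W i)) := Measure.isProbabilityMeasure_map (hW i)
  set Q := Measure.pi fun i => P.map (W i)
  have hQ (x : ι → ℝ) : ∏ i, P {ω | x i < W i ω} = Q (⋂ i, {y | x i < y i}) := by
    have hpi : ⋂ i, {y : ι → ℝ | x i < y i} = Set.univ.pi fun i => Set.Ioi (x i) := by
      ext y
      simp
    rw [hpi, Measure.pi_pi]
    refine Finset.prod_congr rfl fun i _ => ?_
    rw [Measure.map_apply_of_aemeasurable (hW i) measurableSet_Ioi]
    rfl
  have hindep : ∫⁻ y, ∏ i, ENNReal.ofReal (y i) ∂Q = ∏ i, ∫⁻ ω, ENNReal.ofReal (W i ω) ∂P := by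
    rw [lintegral_prod_eq_prod_lintegral_of_indepFun _ _
      (iIndepFun_pi fun i => ENNReal.measurable_ofReal.aemeasurable)
      fun i => by fun_prop]
    refine Finset.prod_congr rfl fun i _ => ?_
    rw [← lintegral_map' ENNReal.measurable_ofReal.aemeasurable (hW i)]
    exact (measurePreserving_eval _ i).lintegral_comp ENNReal.measurable_ofReal
  rw [lintegral_prod_ofReal_eq_lintegral_measure_lt hW, ← hindep,
    lintegral_prod_ofReal_eq_lintegral_measure_lt fun i => (measurable_pi_apply i).aemeasurable,
    ← lintegral_const_mul' _ _ ENNReal.coe_ne_top]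
  exact lintegral_mono fun x => hQ x ▸ h x

theorem UpperEND.measure_le_sum_le {C : ℝ≥0} [IsProbabilityMeasure P] {W : ι → Ω → ℝ}
    (h : UpperEND P C W) (hW : ∀ i, AEMeasurable (W i) P) {t : ℝ} (ht : 0 ≤ t) (a : ℝ) :
    P {ω | a ≤ ∑ i, W i ω} ≤ C * ENNReal.ofReal (Real.exp (-t * a)) *
      ∏ i, ∫⁻ ω, ENNReal.ofReal (Real.exp (t * W i ω)) ∂P := by
  have hexp : UpperEND P C fun i ω => Real.exp (t * W i ω) :=
    h.comp_monotone (f := fun _ y => Real.exp (t * y))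
      (fun _ => Real.exp_monotone.comp (monotone_mul_left_of_nonneg ht)) fun _ => by fun_prop
  have hmeas (i) : AEMeasurable (fun ω => Real.exp (t * W i ω)) P := by
    have := hW i
    fun_prop
  have hle (ω) (hω : a ≤ ∑ i, W i ω) :
      1 ≤ ENNReal.ofReal (Real.exp (-t * a)) * ∏ i, ENNReal.ofReal (Real.exp (t * W i ω)) := by
    rw [← ENNReal.ofReal_prod_of_nonneg fun _ _ => (Real.exp_pos _).le, ← Real.exp_sum,
      ← ENNReal.ofReal_mul (Real.exp_pos _).le, ← Real.exp_add, ENNReal.one_le_ofReal,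
      Real.one_le_exp_iff, ← Finset.mul_sum]
    nlinarith
  calc P {ω | a ≤ ∑ i, W i ω}
      ≤ ∫⁻ ω, ENNReal.ofReal (Real.exp (-t * a)) *
          ∏ i, ENNReal.ofReal (Real.exp (t * W i ω)) ∂P :=
        (measure_mono hle).trans <|
          (one_mul _).symm.trans_le (mul_meas_ge_le_lintegral₀ (by fun_prop) 1)
    _ = ENNReal.ofReal (Real.exp (-t * a)) * ∫⁻ ω, ∏ i, ENNReal.ofReal (Real.exp (t * W i ω)) ∂P :=
        lintegral_const_mul' _ _ ENNReal.ofReal_ne_top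
    _ ≤ ENNReal.ofReal (Real.exp (-t * a)) *
          (C * ∏ i, ∫⁻ ω, ENNReal.ofReal (Real.exp (t * W i ω)) ∂P) := by
        gcongr
        exact hexp.lintegral_prod_ofReal_le hmeas
    _ = _ := by ring

end OrthantDependence

section Truncation

variable {Ω : Type*} [MeasurableSpace Ω] {P : Measure Ω}

theorem tendsto_integral_max_neg_natCast {X : Ω → ℝ} (hX : Integrable X P) :
    Tendsto (fun M : ℕ => ∫ ω, max (X ω) (-M) ∂P) atTop (nhds (∫ ω, X ω ∂P)) := by
  refine tendsto_integral_of_dominated_convergence (fun ω => |X ω|)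
    (fun M => hX.aestronglyMeasurable.sup aestronglyMeasurable_const) hX.abs
    (fun M => ae_of_all _ fun ω => ?_) (ae_of_all _ fun ω => ?_)
  · rw [Real.norm_eq_abs, abs_le]
    exact ⟨(neg_abs_le _).trans (le_max_left _ _), max_le (le_abs_self _)
      ((neg_nonpos.2 M.cast_nonneg).trans (abs_nonneg _))⟩
  · refine tendsto_atTop_of_eventually_const (i₀ := ⌈-X ω⌉₊) fun M hM => max_eq_left ?_
    linarith [(Nat.le_ceil (-X ω)).trans (Nat.cast_le.2 hM)]

variable [IsFiniteMeasure P]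

theorem integrable_min_sq {Z : Ω → ℝ} {b : ℝ} (hZm : AEMeasurable Z P) (hZ : 0 ≤ᵐ[P] Z)
    (hb : 0 ≤ b) : Integrable (fun ω => min (Z ω) b ^ 2) P := by
  refine .of_mem_Icc 0 (b ^ 2) (by fun_prop) ?_
  filter_upwards [hZ] with ω hω
  exact ⟨sq_nonneg _, pow_le_pow_left₀ (le_min hω hb) (min_le_right _ _) 2⟩

theorem measure_lt_le_integral_min_sq_div_sq {Z : Ω → ℝ} {b : ℝ} (hZm : AEMeasurable Z P)
    (hZ : 0 ≤ᵐ[P] Z) (hb : 0 < b) :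
    P {ω | b < Z ω} ≤ ENNReal.ofReal ((∫ ω, min (Z ω) b ^ 2 ∂P) / b ^ 2) := by
  have hmarkov : b ^ 2 * P.real {ω | b ^ 2 ≤ min (Z ω) b ^ 2} ≤ ∫ ω, min (Z ω) b ^ 2 ∂P :=
    mul_meas_ge_le_integral_of_nonneg (ae_of_all _ fun ω => sq_nonneg _)
      (integrable_min_sq hZm hZ hb.le) (b ^ 2)
  refine (measure_mono fun ω (hω : b < Z ω) => ?_).trans
    ((ENNReal.le_ofReal_iff_toReal_le (measure_ne_top P _) ?_).2 ((le_div_iff₀' ?_).2 hmarkov))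
  · simp only [Set.mem_ofPred_eq, min_eq_right hω.le, le_refl]
  · positivity
  · positivity

-- Comparing `min x u` with the concave function `u ↦ x * u / (x + u)` of the same size makes the
-- sum over a geometric sequence of levels telescope.
theorem min_sq_div_le_mul_sub {x u c : ℝ} (hx : 0 ≤ x) (hu : 0 < u) (hc : 1 < c) :
    min x u ^ 2 / u ≤
      4 * c / (c - 1) * (x * (c * u) / (x + c * u) - x * u / (x + u)) := by
  have hc1 : 0 < c - 1 := sub_pos.2 hc
  have hmin : min x u ≤ 2 * (x * u / (x + u)) := by
    rw [← mul_div_assoc, le_div_iff₀ (by positivity)]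
    rcases le_total x u with h | h
    · rw [min_eq_left h]
      nlinarith
    · rw [min_eq_right h]
      nlinarith
  have hle : x + c * u ≤ c * (x + u) := by nlinarith
  calc min x u ^ 2 / u
      ≤ (2 * (x * u / (x + u))) ^ 2 / u := by gcongr
    _ = 4 * c * x ^ 2 * u / (c * (x + u) * (x + u)) := by field_simp; ring
    _ ≤ 4 * c * x ^ 2 * u / ((x + c * u) * (x + u)) := by gcongr
    _ = _ := by field_simp; ring

theorem sum_min_sq_div_geometric_le {x ε c : ℝ} (hx : 0 ≤ x) (hε : 0 < ε) (hc : 1 < c) (N : ℕ) :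
    ∑ k ∈ Finset.range N, min x (ε * c ^ k) ^ 2 / (ε * c ^ k) ≤ 4 * c / (c - 1) * x := by
  have hconst : 0 ≤ 4 * c / (c - 1) := div_nonneg (by positivity) (sub_pos.2 hc).le
  have hu (k : ℕ) : 0 < ε * c ^ k := by positivity
  let g : ℕ → ℝ := fun k => x * (ε * c ^ k) / (x + ε * c ^ k)
  have hg0 : 0 ≤ g 0 := by have := hu 0; positivity
  have hgx : g N ≤ x := by
    have := hu N
    exact (div_le_iff₀ (by positivity)).2 (by nlinarith)
  calc ∑ k ∈ Finset.range N, min x (ε * c ^ k) ^ 2 / (ε * c ^ k)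
      ≤ ∑ k ∈ Finset.range N, 4 * c / (c - 1) * (g (k + 1) - g k) := by
        refine Finset.sum_le_sum fun k _ => (min_sq_div_le_mul_sub hx (hu k) hc).trans_eq ?_
        rw [mul_left_comm c, ← pow_succ']
    _ = 4 * c / (c - 1) * (g N - g 0) := by rw [← Finset.mul_sum, Finset.sum_range_sub]
    _ ≤ 4 * c / (c - 1) * x :=
        mul_le_mul_of_nonneg_left (by linarith) hconst

theorem summable_integral_min_sq_div_geometric {Z : Ω → ℝ} (hint : Integrable Z P)
    (hZ : 0 ≤ᵐ[P] Z) {ε c : ℝ} (hε : 0 < ε) (hc : 1 < c) :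
    Summable fun k : ℕ => (∫ ω, min (Z ω) (ε * c ^ k) ^ 2 ∂P) / (ε * c ^ k) := by
  have hb (k : ℕ) : 0 ≤ ε * c ^ k := by positivity
  have hintk (k : ℕ) : Integrable (fun ω => min (Z ω) (ε * c ^ k) ^ 2 / (ε * c ^ k)) P :=
    (integrable_min_sq hint.aemeasurable hZ (hb k)).div_const _
  refine summable_of_sum_range_le (c := 4 * c / (c - 1) * ∫ ω, Z ω ∂P)
    (fun k => div_nonneg (integral_nonneg fun ω => sq_nonneg _) (hb k)) fun N => ?_
  simp_rw [← integral_div]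
  rw [← integral_finsetSum _ fun k _ => hintk k, ← integral_const_mul]
  exact integral_mono_ae (integrable_finsetSum _ fun k _ => hintk k) (hint.const_mul _)
    (hZ.mono fun ω hω => sum_min_sq_div_geometric_le hω hε hc N)

end Truncation

-- In the series of `exp (s * a) - 1 - s * a`, every term carries a factor `s ^ k` with `2 ≤ k`.
theorem exp_mul_le_one_add_add_sq_mul {s a : ℝ} (hs0 : 0 ≤ s) (hs1 : s ≤ 1) (ha : 0 ≤ a) :
    Real.exp (s * a) ≤ 1 + s * a + s ^ 2 * (Real.exp a - 1 - a) := by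
  have htail (y : ℝ) :
      HasSum (fun k : ℕ => y ^ (k + 2) / (k + 2).factorial) (Real.exp y - 1 - y) := by
    have h := (hasSum_nat_add_iff' 2).2 (NormedSpace.expSeries_div_hasSum_exp y)
    simpa [Finset.sum_range_succ, Real.exp_eq_exp_ℝ, sub_sub] using h
  have hle : Real.exp (s * a) - 1 - s * a ≤ s ^ 2 * (Real.exp a - 1 - a) := by
    refine hasSum_le (fun k => ?_) (htail (s * a)) ((htail a).mul_left (s ^ 2))
    rw [mul_pow, mul_div_assoc]
    gcongr ?_ * _
    exact pow_le_pow_of_le_one hs0 hs1 (Nat.le_add_left 2 k)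
  linarith

section FukNagaev

variable {Ω : Type*} [MeasurableSpace Ω] {P : Measure Ω} [IsProbabilityMeasure P]

theorem lintegral_exp_mul_le_of_mem_Icc {Y : Ω → ℝ} {b t : ℝ} (hYm : AEMeasurable Y P)
    (hY : ∀ᵐ ω ∂P, Y ω ∈ Set.Icc 0 b) (hb : 0 < b) (ht : 0 ≤ t) :
    ∫⁻ ω, ENNReal.ofReal (Real.exp (t * Y ω)) ∂P ≤ ENNReal.ofReal (Real.exp
      (t * ∫ ω, Y ω ∂P + (∫ ω, Y ω ^ 2 ∂P) / b ^ 2 * (Real.exp (t * b) - 1 - t * b))) := by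
  set φ := Real.exp (t * b) - 1 - t * b
  have hint : Integrable Y P := .of_mem_Icc 0 b hYm hY
  have hint2 : Integrable (fun ω => Y ω ^ 2) P := by
    refine .of_mem_Icc 0 (b ^ 2) (by fun_prop) ?_
    filter_upwards [hY] with ω hω
    exact ⟨sq_nonneg _, pow_le_pow_left₀ hω.1 hω.2 2⟩
  have hint1 : Integrable (fun ω => 1 + t * Y ω) P := (integrable_const _).add (hint.const_mul t)
  have hpoint : ∀ᵐ ω ∂P, Real.exp (t * Y ω) ≤ 1 + t * Y ω + φ / b ^ 2 * Y ω ^ 2 := by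
    filter_upwards [hY] with ω hω
    have h := exp_mul_le_one_add_add_sq_mul (div_nonneg hω.1 hb.le)
      ((div_le_one hb).2 hω.2) (mul_nonneg ht hb.le)
    have hscale : Y ω / b * (t * b) = t * Y ω := by field_simp
    rw [hscale] at h
    exact h.trans_eq (by ring)
  calc ∫⁻ ω, ENNReal.ofReal (Real.exp (t * Y ω)) ∂P
      ≤ ∫⁻ ω, ENNReal.ofReal (1 + t * Y ω + φ / b ^ 2 * Y ω ^ 2) ∂P :=
        lintegral_mono_ae <| hpoint.mono fun ω hω => ENNReal.ofReal_le_ofReal hω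
    _ = ENNReal.ofReal (∫ ω, 1 + t * Y ω + φ / b ^ 2 * Y ω ^ 2 ∂P) :=
        (ofReal_integral_eq_lintegral_ofReal (hint1.add (hint2.const_mul _))
          (hpoint.mono fun ω hω => (Real.exp_pos _).le.trans hω)).symm
    _ = ENNReal.ofReal (1 + t * ∫ ω, Y ω ∂P + φ / b ^ 2 * ∫ ω, Y ω ^ 2 ∂P) := by
        rw [integral_add hint1 (hint2.const_mul _), integral_add (integrable_const _)
          (hint.const_mul t), integral_const_mul, integral_const_mul]
        simp
    _ ≤ _ := ENNReal.ofReal_le_ofReal <| by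
        have h := Real.add_one_le_exp (t * ∫ ω, Y ω ∂P + (∫ ω, Y ω ^ 2 ∂P) / b ^ 2 * φ)
        exact le_trans (le_of_eq (by ring)) h

variable {ι : Type*} [Fintype ι] {C : ℝ≥0}

theorem UpperEND.measure_sum_integral_add_le_sum_le_exp {Y : ι → Ω → ℝ} {b t : ℝ}
    (h : UpperEND P C Y) (hYm : ∀ i, AEMeasurable (Y i) P)
    (hY : ∀ i, ∀ᵐ ω ∂P, Y i ω ∈ Set.Icc 0 b) (hb : 0 < b) (ht : 0 ≤ t) :
    P {ω | ∑ i, ∫ ω, Y i ω ∂P + b ≤ ∑ i, Y i ω} ≤ C * ENNReal.ofReal (Real.exp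
      ((∑ i, ∫ ω, Y i ω ^ 2 ∂P) / b ^ 2 * (Real.exp (t * b) - 1 - t * b) - t * b)) :=
  calc P {ω | ∑ i, ∫ ω, Y i ω ∂P + b ≤ ∑ i, Y i ω}
      ≤ C * ENNReal.ofReal (Real.exp (-t * (∑ i, ∫ ω, Y i ω ∂P + b))) *
          ∏ i, ENNReal.ofReal (Real.exp (t * ∫ ω, Y i ω ∂P +
            (∫ ω, Y i ω ^ 2 ∂P) / b ^ 2 * (Real.exp (t * b) - 1 - t * b))) := by
        refine (h.measure_le_sum_le hYm ht _).trans ?_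
        gcongr with i
        exact lintegral_exp_mul_le_of_mem_Icc (hYm i) (hY i) hb ht
    _ = _ := by
        rw [← ENNReal.ofReal_prod_of_nonneg fun _ _ => (Real.exp_pos _).le, ← Real.exp_sum,
          mul_assoc, ← ENNReal.ofReal_mul (Real.exp_pos _).le, ← Real.exp_add,
          Finset.sum_add_distrib, ← Finset.mul_sum, ← Finset.sum_mul, ← Finset.sum_div]
        ring_nf

-- Bennett's choice of the exponent is `t = log (1 + 1 / v) / b`.
theorem UpperEND.measure_sum_integral_add_le_sum_le_of_sum_integral_sq_le {Y : ι → Ω → ℝ}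
    {b v : ℝ} (h : UpperEND P C Y) (hYm : ∀ i, AEMeasurable (Y i) P)
    (hY : ∀ i, ∀ᵐ ω ∂P, Y i ω ∈ Set.Icc 0 b) (hb : 0 < b) (hv : 0 < v)
    (hvb : (∑ i, ∫ ω, Y i ω ^ 2 ∂P) / b ^ 2 ≤ v) :
    P {ω | ∑ i, ∫ ω, Y i ω ∂P + b ≤ ∑ i, Y i ω} ≤ C * ENNReal.ofReal (Real.exp 1 * v) := by
  set t := Real.log (1 + 1 / v) / b
  have hlog : 0 ≤ Real.log (1 + 1 / v) := Real.log_nonneg (by simp [hv.le])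
  have htb : t * b = Real.log (1 + 1 / v) := div_mul_cancel₀ _ hb.ne'
  have hexp : Real.exp (t * b) = 1 + 1 / v := by rw [htb, Real.exp_log (by positivity)]
  have hexponent : (∑ i, ∫ ω, Y i ω ^ 2 ∂P) / b ^ 2 * (Real.exp (t * b) - 1 - t * b) ≤ 1 := calc
    _ ≤ v * (Real.exp (t * b) - 1 - t * b) := by
        gcongr
        linarith [Real.add_one_le_exp (t * b)]
    _ ≤ v * (1 / v) := by
        gcongr
        linarith
    _ = 1 := mul_one_div_cancel hv.ne'
  refine (h.measure_sum_integral_add_le_sum_le_exp hYm hY hb (div_nonneg hlog hb.le)).trans ?_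
  gcongr
  calc _ ≤ Real.exp (1 - t * b) := by gcongr
    _ = Real.exp 1 / (1 + 1 / v) := by rw [Real.exp_sub, hexp]
    _ ≤ Real.exp 1 / (1 / v) := by
        gcongr
        exact le_add_of_nonneg_left zero_le_one
    _ = Real.exp 1 * v := by rw [one_div, div_inv_eq_mul]

theorem UpperEND.measure_sum_integral_add_le_sum_le_of_mem_Icc {Y : ι → Ω → ℝ} {b : ℝ}
    (h : UpperEND P C Y) (hYm : ∀ i, AEMeasurable (Y i) P)
    (hY : ∀ i, ∀ᵐ ω ∂P, Y i ω ∈ Set.Icc 0 b) (hb : 0 < b) :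
    P {ω | ∑ i, ∫ ω, Y i ω ∂P + b ≤ ∑ i, Y i ω} ≤
      C * ENNReal.ofReal (Real.exp 1 * ((∑ i, ∫ ω, Y i ω ^ 2 ∂P) / b ^ 2)) := by
  set v₀ := (∑ i, ∫ ω, Y i ω ^ 2 ∂P) / b ^ 2
  have hv₀ : 0 ≤ v₀ :=
    div_nonneg (Finset.sum_nonneg fun i _ => integral_nonneg fun ω => sq_nonneg _) (sq_nonneg b)
  have hlim : Tendsto (fun v => C * ENNReal.ofReal (Real.exp 1 * v)) (nhdsWithin v₀ (Set.Ioi v₀))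
      (nhds (C * ENNReal.ofReal (Real.exp 1 * v₀))) :=
    ENNReal.Tendsto.const_mul (ENNReal.tendsto_ofReal
      ((tendsto_id.mono_left nhdsWithin_le_nhds).const_mul _)) (.inr ENNReal.coe_ne_top)
  refine ge_of_tendsto hlim ?_
  filter_upwards [self_mem_nhdsWithin] with v hv
  exact h.measure_sum_integral_add_le_sum_le_of_sum_integral_sq_le hYm hY hb (hv₀.trans_lt hv)
    (le_of_lt hv)

-- Off the event that some `Z i` exceeds `b`, truncating at `b` changes nothing.
theorem UpperEND.measure_sum_integral_add_le_sum_le {Z : ι → Ω → ℝ} {b : ℝ}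
    (h : UpperEND P C Z) (hint : ∀ i, Integrable (Z i) P) (hZ : ∀ i, 0 ≤ᵐ[P] Z i) (hb : 0 < b) :
    P {ω | ∑ i, ∫ ω, Z i ω ∂P + b ≤ ∑ i, Z i ω} ≤ (1 + C * ENNReal.ofReal (Real.exp 1)) *
      ENNReal.ofReal ((∑ i, ∫ ω, min (Z i ω) b ^ 2 ∂P) / b ^ 2) := by
  have hZm (i) : AEMeasurable (Z i) P := (hint i).aemeasurable
  set Y : ι → Ω → ℝ := fun i ω => min (Z i ω) b
  have hY (i) : ∀ᵐ ω ∂P, Y i ω ∈ Set.Icc 0 b :=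
    (hZ i).mono fun ω hω => ⟨le_min hω hb.le, min_le_right _ _⟩
  have hYm (i) : AEMeasurable (Y i) P := (hZm i).min aemeasurable_const
  have hYZ : ∑ i, ∫ ω, Y i ω ∂P ≤ ∑ i, ∫ ω, Z i ω ∂P := Finset.sum_le_sum fun i _ =>
    integral_mono (.of_mem_Icc 0 b (hYm i) (hY i)) (hint i) fun ω => min_le_left _ _
  have hsubset : {ω | ∑ i, ∫ ω, Z i ω ∂P + b ≤ ∑ i, Z i ω} ⊆
      (⋃ i, {ω | b < Z i ω}) ∪ {ω | ∑ i, ∫ ω, Y i ω ∂P + b ≤ ∑ i, Y i ω} := by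
    intro ω hω
    by_cases hlarge : ∃ i, b < Z i ω
    · exact .inl (Set.mem_iUnion.2 hlarge)
    · push Not at hlarge
      refine .inr ((add_le_add_left hYZ b).trans (hω.trans_eq ?_))
      exact Finset.sum_congr rfl fun i _ => (min_eq_left (hlarge i)).symm
  have hlarge : P (⋃ i, {ω | b < Z i ω}) ≤
      ENNReal.ofReal ((∑ i, ∫ ω, Y i ω ^ 2 ∂P) / b ^ 2) := by
    rw [Finset.sum_div, ENNReal.ofReal_sum_of_nonneg fun i _ =>
      div_nonneg (integral_nonneg fun ω => sq_nonneg _) (sq_nonneg b)]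
    exact (measure_iUnion_fintype_le _ _).trans <| Finset.sum_le_sum fun i _ =>
      measure_lt_le_integral_min_sq_div_sq (hZm i) (hZ i) hb
  have hbounded : P {ω | ∑ i, ∫ ω, Y i ω ∂P + b ≤ ∑ i, Y i ω} ≤
      C * ENNReal.ofReal (Real.exp 1 * ((∑ i, ∫ ω, Y i ω ^ 2 ∂P) / b ^ 2)) :=
    (h.comp_monotone (f := fun _ y => min y b) (fun _ y z hyz => min_le_min_right b hyz)
      fun _ => by fun_prop).measure_sum_integral_add_le_sum_le_of_mem_Icc hYm hY hb
  refine (measure_mono hsubset).trans ((measure_union_le _ _).trans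
    ((add_le_add hlarge hbounded).trans_eq ?_))
  rw [ENNReal.ofReal_mul (Real.exp_pos 1).le]
  ring

theorem UpperEND.measure_card_mul_integral_add_le_sum_le {Z : ι → Ω → ℝ} {Y : Ω → ℝ} {b : ℝ}
    (h : UpperEND P C Z) (hid : ∀ i, IdentDistrib (Z i) Y P P) (hint : Integrable Y P)
    (hY : 0 ≤ᵐ[P] Y) (hb : 0 < b) :
    P {ω | Fintype.card ι * ∫ ω, Y ω ∂P + b ≤ ∑ i, Z i ω} ≤
      (1 + C * ENNReal.ofReal (Real.exp 1)) *
        ENNReal.ofReal (Fintype.card ι * (∫ ω, min (Y ω) b ^ 2 ∂P) / b ^ 2) := by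
  have hmin (i) : ∫ ω, min (Z i ω) b ^ 2 ∂P = ∫ ω, min (Y ω) b ^ 2 ∂P :=
    ((hid i).comp (u := fun z => min z b ^ 2) (by fun_prop)).integral_eq
  have htail := h.measure_sum_integral_add_le_sum_le (fun i => (hid i).integrable_iff.2 hint)
    (fun i => (hid i).symm.ae_mem_snd measurableSet_Ici hY) hb
  simpa only [hmin, (hid _).integral_eq, Finset.sum_const, Finset.card_univ, nsmul_eq_mul]
    using htail

end FukNagaev

theorem eventually_le_mul_of_eventually_floor_pow_le {u : ℕ → ℝ} (hu : Monotone u) {c m : ℝ}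
    (hc : 1 < c) (hm : 0 ≤ m) (h : ∀ᶠ k : ℕ in atTop, u ⌊c ^ k⌋₊ ≤ m * c ^ k) :
    ∀ᶠ n : ℕ in atTop, u n ≤ c * m * n := by
  obtain ⟨k₀, hk₀⟩ := eventually_atTop.1 h
  filter_upwards [eventually_ge_atTop ⌈c ^ k₀⌉₊] with n hn
  have hcn : c ^ k₀ ≤ n := (Nat.le_ceil _).trans (by exact_mod_cast hn)
  obtain ⟨k, hkn, hnk⟩ := exists_nat_pow_near ((one_le_pow₀ hc.le).trans hcn) hc
  have hk : k₀ ≤ k + 1 := ((pow_lt_pow_iff_right₀ hc).1 (hcn.trans_lt hnk)).le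
  calc u n ≤ u ⌊c ^ (k + 1)⌋₊ := hu (Nat.le_floor hnk.le)
    _ ≤ m * c ^ (k + 1) := hk₀ (k + 1) hk
    _ = c * m * c ^ k := by ring
    _ ≤ c * m * n := by gcongr

section StrongLaw

variable {Ω : Type*} [MeasurableSpace Ω] {P : Measure Ω} [IsProbabilityMeasure P] {C : ℝ≥0}

theorem UpperEND.ae_eventually_sum_floor_pow_le {Z : ℕ → Ω → ℝ}
    (h : ∀ n, UpperEND P C fun i : Fin n => Z i)
    (hid : ∀ i, IdentDistrib (Z i) (Z 0) P P) (hint : Integrable (Z 0) P)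
    (hZ : 0 ≤ᵐ[P] Z 0) {ε c : ℝ} (hε : 0 < ε) (hc : 1 < c) :
    ∀ᵐ ω ∂P, ∀ᶠ k : ℕ in atTop,
      ∑ i ∈ Finset.range ⌊c ^ k⌋₊, Z i ω ≤ (∫ ω, Z 0 ω ∂P + ε) * c ^ k := by
  set m := ∫ ω, Z 0 ω ∂P
  have hm : 0 ≤ m := integral_nonneg_of_ae hZ
  set b : ℕ → ℝ := fun k => ε * c ^ k
  have hb (k) : 0 < b k := by positivity
  set w : ℕ → ℝ := fun k => (∫ ω, min (Z 0 ω) (b k) ^ 2 ∂P) / b k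
  have hw : Summable w := summable_integral_min_sq_div_geometric hint hZ hε hc
  have hfloor (k : ℕ) : (⌊c ^ k⌋₊ : ℝ) ≤ c ^ k := Nat.floor_le (by positivity)
  have hw_le (k) : ⌊c ^ k⌋₊ * (∫ ω, min (Z 0 ω) (b k) ^ 2 ∂P) / b k ^ 2 ≤ ε⁻¹ * w k := calc
    _ ≤ c ^ k * (∫ ω, min (Z 0 ω) (b k) ^ 2 ∂P) / b k ^ 2 := by
        gcongr
        exact hfloor k
    _ = ε⁻¹ * w k := by
        simp only [b, w]
        field_simp
  have hbound (k : ℕ) : P {ω | ⌊c ^ k⌋₊ * m + b k ≤ ∑ i ∈ Finset.range ⌊c ^ k⌋₊, Z i ω} ≤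
      (1 + C * ENNReal.ofReal (Real.exp 1)) * ENNReal.ofReal (ε⁻¹ * w k) := by
    have htail := (h ⌊c ^ k⌋₊).measure_card_mul_integral_add_le_sum_le (fun i => hid i) hint hZ
      (hb k)
    rw [Fintype.card_fin] at htail
    simp only [Finset.sum_range]
    exact htail.trans (by gcongr; exact hw_le k)
  have hsum : ∑' k, P {ω | ⌊c ^ k⌋₊ * m + b k ≤ ∑ i ∈ Finset.range ⌊c ^ k⌋₊, Z i ω} ≠ ∞ := by
    refine ne_top_of_le_ne_top ?_ (ENNReal.tsum_le_tsum hbound)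
    rw [ENNReal.tsum_mul_left]
    exact ENNReal.mul_ne_top (by finiteness) (hw.mul_left _).tsum_ofReal_ne_top
  filter_upwards [ae_eventually_notMem hsum] with ω hω
  filter_upwards [hω] with k hk
  calc ∑ i ∈ Finset.range ⌊c ^ k⌋₊, Z i ω ≤ ⌊c ^ k⌋₊ * m + b k := (not_le.1 hk).le
    _ ≤ c ^ k * m + ε * c ^ k := by
        gcongr
        exact hfloor k
    _ = (m + ε) * c ^ k := by ring

theorem UpperEND.ae_eventually_sum_le_mul_of_nonneg {Z : ℕ → Ω → ℝ}
    (h : ∀ n, UpperEND P C fun i : Fin n => Z i)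
    (hid : ∀ i, IdentDistrib (Z i) (Z 0) P P) (hint : Integrable (Z 0) P)
    (hZ : 0 ≤ᵐ[P] Z 0) {r : ℝ} (hr : ∫ ω, Z 0 ω ∂P < r) :
    ∀ᵐ ω ∂P, ∀ᶠ n : ℕ in atTop, ∑ i ∈ Finset.range n, Z i ω ≤ r * n := by
  obtain ⟨m, hm, hmr⟩ := exists_between hr
  have hm0 : 0 < m := (integral_nonneg_of_ae hZ).trans_lt hm
  have hZi (i) : 0 ≤ᵐ[P] Z i := (hid i).symm.ae_mem_snd measurableSet_Ici hZ
  filter_upwards [ae_all_iff.2 hZi, UpperEND.ae_eventually_sum_floor_pow_le h hid hint hZ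
    (sub_pos.2 hm) ((one_lt_div hm0).2 hmr)] with ω hω hgeom
  have hmono : Monotone fun n => ∑ i ∈ Finset.range n, Z i ω :=
    monotone_nat_of_le_succ fun n => by
      rw [Finset.sum_range_succ]
      exact le_add_of_nonneg_right (hω n)
  rw [add_sub_cancel] at hgeom
  simpa only [div_mul_cancel₀ r hm0.ne'] using
    eventually_le_mul_of_eventually_floor_pow_le hmono ((one_lt_div hm0).2 hmr) hm0.le hgeom

theorem UpperEND.ae_eventually_sum_div_lt {X : ℕ → Ω → ℝ}
    (h : ∀ n, UpperEND P C fun i : Fin n => X i)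
    (hid : ∀ i, IdentDistrib (X i) (X 0) P P) (hint : Integrable (X 0) P)
    {r : ℝ} (hr : ∫ ω, X 0 ω ∂P < r) :
    ∀ᵐ ω ∂P, ∀ᶠ n : ℕ in atTop, (∑ i ∈ Finset.range n, X i ω) / n < r := by
  obtain ⟨s, hs, hsr⟩ := exists_between hr
  obtain ⟨M, hM⟩ := ((tendsto_integral_max_neg_natCast hint).eventually_lt_const hs).exists
  set f : ℝ → ℝ := fun x => max x (-M) + M
  have hf : Monotone f := fun x y hxy =>
    add_le_add_left (max_le_max_right _ hxy) _
  have hf_int : Integrable (fun ω => max (X 0 ω) (-M)) P := hint.sup (integrable_const _)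
  have hf_lt : ∫ ω, f (X 0 ω) ∂P < s + M := by
    rw [integral_add hf_int (integrable_const _)]
    simpa using hM
  have hf0 (x) : 0 ≤ f x := neg_le_iff_add_nonneg.1 (le_max_right _ _)
  filter_upwards [UpperEND.ae_eventually_sum_le_mul_of_nonneg
    (Z := fun i ω => f (X i ω)) (fun n => (h n).comp_monotone (fun _ => hf) fun _ => by fun_prop)
    (fun i => (hid i).comp (u := f) (by fun_prop)) (hf_int.add (integrable_const _))
    (ae_of_all _ fun ω => hf0 _) hf_lt] with ω hω
  filter_upwards [hω, eventually_gt_atTop 0] with n hn hn0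
  have hn0' : (0 : ℝ) < n := Nat.cast_pos.2 hn0
  have hshift : ∑ i ∈ Finset.range n, X i ω + n * M ≤ ∑ i ∈ Finset.range n, f (X i ω) := calc
    _ = ∑ i ∈ Finset.range n, (X i ω + M) := by simp [Finset.sum_add_distrib]
    _ ≤ _ := Finset.sum_le_sum fun i _ => add_le_add_left (le_max_left _ _) _
  rw [div_lt_iff₀ hn0']
  nlinarith

theorem UpperEND.ae_forall_eventually_sum_div_lt {X : ℕ → Ω → ℝ}
    (h : ∀ n, UpperEND P C fun i : Fin n => X i)
    (hid : ∀ i, IdentDistrib (X i) (X 0) P P) (hint : Integrable (X 0) P) :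
    ∀ᵐ ω ∂P, ∀ r > ∫ ω, X 0 ω ∂P, ∀ᶠ n : ℕ in atTop,
      (∑ i ∈ Finset.range n, X i ω) / n < r := by
  have hrat : ∀ᵐ ω ∂P, ∀ q : ℚ, ∫ ω, X 0 ω ∂P < q →
      ∀ᶠ n : ℕ in atTop, (∑ i ∈ Finset.range n, X i ω) / n < q :=
    ae_all_iff.2 fun q => eventually_imp_distrib_left.2 fun hq =>
      UpperEND.ae_eventually_sum_div_lt h hid hint hq
  filter_upwards [hrat] with ω hω r hr
  obtain ⟨q, hq, hqr⟩ := exists_rat_btwn hr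
  exact (hω q hq).mono fun n hn => hn.trans hqr

end StrongLaw

section ENDProb

variable {Ω : Type} [MeasurableSpace Ω] {P : Measure Ω} {K : ℝ} {X : ℕ → Ω → ℝ}

theorem ENDProb.measure_iInter_fin_le (h : ENDProb P K X) {n : ℕ} (x : Fin n → ℝ) :
    P (⋂ i : Fin n, {ω | X i ω ≤ x i}) ≤ K.toNNReal * ∏ i : Fin n, P {ω | X i ω ≤ x i} ∧
      P (⋂ i : Fin n, {ω | x i < X i ω}) ≤ K.toNNReal * ∏ i : Fin n, P {ω | x i < X i ω} := by
  have hInter (A : ℕ → Set Ω) : ⋂ i ∈ Finset.range n, A i = ⋂ i : Fin n, A i := by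
    ext ω
    simp [Fin.forall_iff]
  obtain ⟨y, rfl⟩ : ∃ y : ℕ → ℝ, (fun i : Fin n => y i) = x :=
    ⟨fun i => if hi : i < n then x ⟨i, hi⟩ else 0, by simp⟩
  have hy := h n y
  simp only [hInter, Finset.prod_range] at hy
  exact hy

theorem ENDProb.upperEND (h : ENDProb P K X) (n : ℕ) :
    UpperEND P K.toNNReal fun i : Fin n => X i :=
  fun x => (h.measure_iInter_fin_le x).2

theorem ENDProb.upperEND_neg (h : ENDProb P K X) (n : ℕ) :
    UpperEND P K.toNNReal fun (i : Fin n) ω => -X i ω := by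
  intro x
  have hunion (i) : {ω | x i < -X i ω} = ⋃ q : {q : ℚ // x i < q}, {ω | X i ω ≤ -q} := by
    ext ω
    simp only [Set.mem_ofPred_eq, Set.mem_iUnion, Subtype.exists, exists_prop]
    refine ⟨fun hω => ?_, fun ⟨q, hxq, hq⟩ => hxq.trans_le (le_neg_of_le_neg hq)⟩
    obtain ⟨q, hxq, hq⟩ := exists_rat_btwn hω
    exact ⟨q, hxq, le_neg_of_le_neg hq.le⟩
  simp_rw [hunion]
  exact measure_iInter_iUnion_le_mul_prod
    (fun i q q' hq ω (hω : X i ω ≤ -q') => hω.trans (neg_le_neg (Rat.cast_le.2 hq)))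
    fun g => (h.measure_iInter_fin_le _).1

end ENDProb

/-- Corollary 4.6, direct part: strong law of large numbers for extended
negatively dependent, identically distributed random variables on a
probability space. -/
theorem stmt13 {Ω : Type} [MeasurableSpace Ω] (P : Measure Ω)
    [IsProbabilityMeasure P] (X : ℕ → Ω → ℝ)
    (K : ℝ) (hK : 1 ≤ K)
    (hid : ∀ i, ProbabilityTheory.IdentDistrib (X i) (X 0) P P)
    (hEND : ENDProb P K X)
    (hint : Integrable (X 0) P) :
    P {ω | Tendsto (fun n : ℕ => (∑ k ∈ Finset.range n, X k ω) / n)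
        atTop (nhds (∫ ω, X 0 ω ∂P))} = 1 := by
  have hid_neg (i) : IdentDistrib (fun ω => -X i ω) (fun ω => -X 0 ω) P P :=
    (hid i).comp measurable_neg
  have hae : ∀ᵐ ω ∂P, Tendsto (fun n : ℕ => (∑ k ∈ Finset.range n, X k ω) / n)
      atTop (nhds (∫ ω, X 0 ω ∂P)) := by
    filter_upwards [UpperEND.ae_forall_eventually_sum_div_lt hEND.upperEND hid hint,
      UpperEND.ae_forall_eventually_sum_div_lt hEND.upperEND_neg hid_neg hint.neg]
      with ω hupper hlower
    refine tendsto_order.2 ⟨fun r hr => ?_, hupper⟩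
    have hr_neg : ∫ ω, -X 0 ω ∂P < -r := by rwa [integral_neg, neg_lt_neg_iff]
    filter_upwards [hlower (-r) hr_neg] with n hn
    rwa [Finset.sum_neg_distrib, neg_div, neg_lt_neg_iff] at hn
  rw [measure_congr (eventuallyEq_univ.2 hae), measure_univ]
end
end
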